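/- arXiv:2504.21542 — 3 statements merged into one kernel-verified Lean document; each statement's English description precedes it below -/
import Mathlib

section
/- Let G be a group that is an extension of a free group by a finite p-group (i.e., G has a normal free subgroup N with G/N a finite p-group). Then G is residually a finite p-group. -/
def ResiduallyFiniteP (p : ℕ) (G : Type*) [Group G] : Prop :=
  ∀ g : G, g ≠ 1 → ∃ M : Subgroup G, M.Normal ∧ (∃ k : ℕ, M.index = p ^ k) ∧ g ∉ M

/-!
If `N` is residually finite-`p` and `G ⧸ N` is a finite `p`-group, separate `g ∈ N` from `1` by a
subgroup `M` normal in `N` of index `p ^ k`. Its normal core in `G` still omits `g` and has finite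
index; and since `N` is normal, `p ^ k`-th powers of conjugates of elements of `N` stay in `M`, so
`p ^ k`-th powers of elements of `N` lie in the core. Hence the quotient by the core is a `p`-group.

For a free group, write `g ≠ 1` in syllables `a₀ ^ e₀ ⋯ aₙ₋₁ ^ eₙ₋₁` with `aᵢ ≠ aᵢ₊₁` and `eᵢ ≠ 0`,
and send a generator `x` to `1 + A x`, where `A x` is the sum of the elementary matrices
`E i (i + 1)` with `aᵢ = x`. Since `A x` squares to zero, `x ^ e` goes to `1 + e • A x`, and the top
right entry of the image of `g` is `∏ eᵢ`. This is nonzero modulo a large power of `p`, and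
unitriangular matrices over `ZMod (p ^ m)` form a finite `p`-group.
-/

section Unitriangular

variable {n R : Type*} [LinearOrder n] [Fintype n]

theorem mul_apply_eq_zero_of_isUpperTriangular [NonUnitalNonAssocSemiring R] {X Y : Matrix n n R}
    (hX : X.IsUpperTriangular) (hY : ∀ i j, j ≤ i → Y i j = 0) {i j : n} (hji : j ≤ i) :
    (X * Y) i j = 0 := by
  rw [Matrix.mul_apply]
  refine Finset.sum_eq_zero fun k _ => ?_
  rcases lt_or_ge k i with hki | hik
  · rw [hX hki, zero_mul]
  · rw [hY k j (hji.trans hik), mul_zero]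

variable (n R) in
/-- The non-unital ring of strictly upper triangular matrices, the matrices `X` for which `1 + X` is
unitriangular. -/
def strictlyUpperTriangular [Ring R] : NonUnitalSubring (Matrix n n R) where
  carrier := {X | ∀ i j, j ≤ i → X i j = 0}
  zero_mem' _ _ _ := rfl
  add_mem' hX hY i j hij := by simp [hX i j hij, hY i j hij]
  neg_mem' hX i j hij := by simp [hX i j hij]
  mul_mem' hX hY _ _ := mul_apply_eq_zero_of_isUpperTriangular (fun i j hji => hX i j hji.le) hY

theorem isUpperTriangular_of_sub_one_mem_strictlyUpperTriangular [Ring R] {X : Matrix n n R}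
    (hX : X - 1 ∈ strictlyUpperTriangular n R) : X.IsUpperTriangular := fun i j hji => by
  simpa [Matrix.one_apply_ne (show j < i from hji).ne'] using hX i j (show j < i from hji).le

variable [CommRing R]

theorem isUnit_of_sub_one_mem_strictlyUpperTriangular {X : Matrix n n R}
    (hX : X - 1 ∈ strictlyUpperTriangular n R) : IsUnit X := by
  have diag_eq_one (i : n) : X i i = 1 := by simpa [sub_eq_zero] using hX i i le_rfl
  rw [Matrix.isUnit_iff_isUnit_det,
    Matrix.det_of_isUpperTriangular
      (isUpperTriangular_of_sub_one_mem_strictlyUpperTriangular hX)]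
  simp [diag_eq_one]

variable (n R) in
/-- The group of upper triangular matrices with ones on the diagonal. -/
def unitriangular : Subgroup (Matrix n n R)ˣ where
  carrier := {u | (u : Matrix n n R) - 1 ∈ strictlyUpperTriangular n R}
  one_mem' := by simp [zero_mem]
  mul_mem' {u v} hu hv := by
    have : (u * v - 1 : Matrix n n R) = (u - 1) * (v - 1) + (u - 1) + (v - 1) := by noncomm_ring
    simp only [Set.mem_ofPred_eq, Units.val_mul, this]
    exact add_mem (add_mem (mul_mem hu hv) hu) hv
  inv_mem' {u} hu := by
    let U : Matrix n n R := u
    let V : Matrix n n R := (u⁻¹ : (Matrix n n R)ˣ)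
    have hV : V.IsUpperTriangular := by
      let := u.invertible
      simp only [V, Matrix.coe_units_inv]
      exact Matrix.blockTriangular_inv_of_blockTriangular
        (isUpperTriangular_of_sub_one_mem_strictlyUpperTriangular hu)
    have : V - 1 = -(V * (U - 1)) := by simp [U, V, mul_sub]
    change V - 1 ∈ strictlyUpperTriangular n R
    rw [this]
    exact neg_mem fun i j hji => mul_apply_eq_zero_of_isUpperTriangular hV hu hji

theorem mem_unitriangular {u : (Matrix n n R)ˣ} :
    u ∈ unitriangular n R ↔ (u : Matrix n n R) - 1 ∈ strictlyUpperTriangular n R := Iff.rfl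

theorem card_unitriangular :
    Nat.card (unitriangular n R) = Nat.card (strictlyUpperTriangular n R) := by
  refine Nat.card_eq_of_bijective
    (fun u => (⟨u.1.val - 1, u.2⟩ : strictlyUpperTriangular n R)) ⟨fun u v huv => ?_, ?_⟩
  · exact Subtype.ext (Units.ext (sub_left_injective (congrArg Subtype.val huv)))
  · rintro ⟨X, hX⟩
    have hX' : 1 + X - 1 ∈ strictlyUpperTriangular n R := by rwa [add_sub_cancel_left]
    obtain ⟨u, hu⟩ := isUnit_of_sub_one_mem_strictlyUpperTriangular hX'
    exact ⟨⟨u, by rwa [mem_unitriangular, hu]⟩, Subtype.ext (by simp [hu])⟩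

theorem isPGroup_unitriangular {p m : ℕ} (hR : Nat.card R = p ^ m) :
    IsPGroup p (unitriangular n R) := by
  have card_matrix : Nat.card (Matrix n n R) = p ^ (m * Fintype.card n * Fintype.card n) := by
    simp [Matrix, Nat.card_fun, hR, pow_mul]
  refine IsPGroup.of_card_dvd_pow (n := m * Fintype.card n * Fintype.card n) ?_
  rw [card_unitriangular, ← card_matrix]
  exact (strictlyUpperTriangular n R).toAddSubgroup.card_addSubgroup_dvd_card

end Unitriangular

section LowerHessenberg

variable {n : ℕ} {R : Type*}

/-- A matrix is lower Hessenberg if its entries above the first superdiagonal vanish. -/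
def IsLowerHessenberg [Zero R] (M : Matrix (Fin n) (Fin n) R) : Prop :=
  ∀ i j : Fin n, (i : ℕ) + 1 < j → M i j = 0

theorem IsLowerHessenberg.list_prod_apply_eq_zero [Semiring R]
    {l : List (Matrix (Fin n) (Fin n) R)} (hl : ∀ M ∈ l, IsLowerHessenberg M) {i j : Fin n}
    (hij : i + l.length < j) : l.prod i j = 0 := by
  induction l generalizing i with
  | nil => exact Matrix.one_apply_ne (by rintro rfl; simp at hij)
  | cons M l ih =>
    simp only [List.forall_mem_cons, List.length_cons] at hl hij
    rw [List.prod_cons, Matrix.mul_apply]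
    refine Finset.sum_eq_zero fun k _ => ?_
    rcases lt_or_ge (i + 1 : ℕ) k with hik | hki
    · rw [hl.1 i k hik, zero_mul]
    · rw [ih hl.2 (by omega), mul_zero]

/-- A path of `m` steps from `i` to `i + m`, none longer than one, follows the superdiagonal. -/
theorem IsLowerHessenberg.ofFn_prod_apply [CommSemiring R] {m : ℕ}
    {M : Fin m → Matrix (Fin n) (Fin n) R} (hM : ∀ k, IsLowerHessenberg (M k)) {i j : Fin n}
    (hij : (i : ℕ) + m = j) :
    (List.ofFn M).prod i j = ∏ k : Fin m, M k ⟨i + k, by omega⟩ ⟨i + k + 1, by omega⟩ := by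
  induction m generalizing i with
  | zero => simp [Fin.ext (show (i : ℕ) = j from hij)]
  | succ m ih =>
    let i' : Fin n := ⟨i + 1, by omega⟩
    rw [List.ofFn_succ, List.prod_cons, Matrix.mul_apply, Finset.sum_eq_single i' _ (by simp),
      ih (fun k => hM k.succ) (by simp only [i']; omega), Fin.prod_univ_succ]
    · simp only [i', Fin.val_succ, Fin.val_zero, add_zero, add_assoc, add_comm 1]
    · intro k _ hk
      rcases lt_or_ge (i + 1 : ℕ) k with hik | hki
      · rw [hM 0 i k hik, zero_mul]
      · have hki' : (k : ℕ) ≠ i + 1 := fun h => hk (Fin.ext h)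
        rw [list_prod_apply_eq_zero, mul_zero]
        · exact List.forall_mem_ofFn_iff.2 fun k => hM k.succ
        · rw [List.length_ofFn]; omega

end LowerHessenberg

section SquareZero

variable {S : Type*} [Ring S]

/-- The unit `1 + x`, with inverse `1 - x`, attached to an element `x` of square zero. -/
@[simps]
def oneAddUnit (x : S) (hx : x * x = 0) : Sˣ where
  val := 1 + x
  inv := 1 - x
  val_inv := by simp [add_mul, mul_sub, hx]
  inv_val := by simp [sub_mul, mul_add, hx]

theorem val_oneAddUnit_zpow (x : S) (hx : x * x = 0) (e : ℤ) :
    ((oneAddUnit x hx ^ e : Sˣ) : S) = 1 + e • x := by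
  induction e using Int.induction_on with
  | zero => simp
  | succ e ih =>
    rw [zpow_add_one, Units.val_mul, ih, val_oneAddUnit, mul_add, mul_one, add_mul, one_mul,
      smul_mul_assoc, hx, smul_zero, add_zero, add_smul, one_smul, add_assoc]
  | pred e ih =>
    rw [zpow_sub_one, Units.val_mul, ih, val_inv_oneAddUnit, mul_sub, mul_one, add_mul, one_mul,
      smul_mul_assoc, hx, smul_zero, add_zero, sub_smul, one_smul, add_sub_assoc]

end SquareZero

section Syllables

variable {α : Type*}

theorem exists_syllables (g : FreeGroup α) :
    ∃ (n : ℕ) (a : Fin n → α) (e : Fin n → ℤ), (∀ i j : Fin n, (i : ℕ) + 1 = j → a i ≠ a j) ∧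
      (∀ i, e i ≠ 0) ∧ (List.ofFn fun i => FreeGroup.of (a i) ^ e i).prod = g := by
  classical
  obtain ⟨w, hw⟩ : ∃ w : Monoid.CoprodI.Word fun _ : α => FreeGroup Unit,
      w.prod = freeGroupEquivCoprodI g :=
    Monoid.CoprodI.Word.equiv.symm.surjective _
  let exponent : FreeGroup Unit → ℤ := FreeGroup.freeGroupUnitEquivInt
  have of_zpow_exponent (x : FreeGroup Unit) : FreeGroup.of () ^ exponent x = x :=
    FreeGroup.freeGroupUnitEquivInt.symm_apply_apply x
  refine ⟨w.toList.length, fun i => w.toList[i].1, fun i => exponent w.toList[i].2, ?_, ?_, ?_⟩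
  · rintro i ⟨_, hj⟩ rfl
    exact List.isChain_iff_getElem.1 w.chain_ne i hj
  · intro i hi
    refine w.ne_one _ (List.getElem_mem i.2) ?_
    exact (of_zpow_exponent _).symm.trans ((congrArg _ hi).trans (zpow_zero _))
  · refine freeGroupEquivCoprodI.injective ?_
    let inclusion (x : α) : FreeGroup Unit →* Monoid.CoprodI fun _ : α => FreeGroup Unit :=
      Monoid.CoprodI.of (M := fun _ : α => FreeGroup Unit) (i := x)
    have equiv_of (x : α) :
        freeGroupEquivCoprodI (FreeGroup.of x) = inclusion x (FreeGroup.of ()) := by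
      simp [inclusion]
    have syllable_eq (s : Σ _ : α, FreeGroup Unit) :
        freeGroupEquivCoprodI (FreeGroup.of s.1 ^ exponent s.2) = inclusion s.1 s.2 := by
      rw [map_zpow, equiv_of, ← map_zpow, of_zpow_exponent]
    rw [← hw, Monoid.CoprodI.Word.prod, ← List.ofFn_getElem_eq_map, map_list_prod, List.map_ofFn]
    exact congrArg (fun f => (List.ofFn f).prod) (funext fun i => syllable_eq w.toList[i])

variable {n : ℕ}

section Ring

variable (R : Type*) [Ring R]

open scoped Classical in
/-- For a word with syllables in the generators `a 0, …, a (n - 1)`, the sum of the elementary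
matrices `E i (i + 1)` over the positions `i` of the generator `x`. -/
noncomputable def stepMatrix (a : Fin n → α) (x : α) : Matrix (Fin (n + 1)) (Fin (n + 1)) R :=
  ∑ i with a i = x, Matrix.single i.castSucc i.succ 1

variable {R}

theorem stepMatrix_castSucc_succ (a : Fin n → α) (i : Fin n) :
    stepMatrix R a (a i) i.castSucc i.succ = 1 := by
  classical
  rw [stepMatrix, Matrix.sum_apply, Finset.sum_eq_single i]
  · simp
  · intro j _ hj
    simp [hj]
  · simp

theorem stepMatrix_apply_of_ne (a : Fin n → α) (x : α) {i j : Fin (n + 1)} (hij : (i : ℕ) + 1 ≠ j) :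
    stepMatrix R a x i j = 0 := by
  classical
  rw [stepMatrix, Matrix.sum_apply]
  refine Finset.sum_eq_zero fun k _ => Matrix.single_apply_of_ne _ _ _ _ _ ?_
  rintro ⟨rfl, rfl⟩
  simp at hij

theorem stepMatrix_mem_strictlyUpperTriangular (a : Fin n → α) (x : α) :
    stepMatrix R a x ∈ strictlyUpperTriangular (Fin (n + 1)) R := fun i j hji =>
  stepMatrix_apply_of_ne a x (by have : (j : ℕ) ≤ i := hji; omega)

theorem stepMatrix_mul_self {a : Fin n → α} (ha : ∀ i j : Fin n, (i : ℕ) + 1 = j → a i ≠ a j)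
    (x : α) : stepMatrix R a x * stepMatrix R a x = 0 := by
  classical
  simp only [stepMatrix, Finset.sum_mul_sum]
  refine Finset.sum_eq_zero fun i hi => Finset.sum_eq_zero fun j hj =>
    Matrix.single_mul_single_of_ne _ _ _ _ (fun hij => ?_) _
  have ai_eq_aj : a i = a j := (Finset.mem_filter.1 hi).2.trans (Finset.mem_filter.1 hj).2.symm
  exact ha i j (by simpa using congrArg Fin.val hij) ai_eq_aj

variable (R) in
/-- The representation sending each generator `x` to `1 + stepMatrix R a x`. -/
noncomputable def stepRep {a : Fin n → α} (ha : ∀ i j : Fin n, (i : ℕ) + 1 = j → a i ≠ a j) :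
    FreeGroup α →* (Matrix (Fin (n + 1)) (Fin (n + 1)) R)ˣ :=
  FreeGroup.lift fun x => oneAddUnit (stepMatrix R a x) (stepMatrix_mul_self ha x)

theorem val_stepRep_of_zpow {a : Fin n → α}
    (ha : ∀ i j : Fin n, (i : ℕ) + 1 = j → a i ≠ a j) (x : α) (e : ℤ) :
    (stepRep R ha (FreeGroup.of x ^ e)).val = 1 + e • stepMatrix R a x := by
  rw [map_zpow, stepRep, FreeGroup.lift_apply_of, val_oneAddUnit_zpow]

end Ring

variable {R : Type*} [CommRing R] {a : Fin n → α}
  (ha : ∀ i j : Fin n, (i : ℕ) + 1 = j → a i ≠ a j)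

theorem range_stepRep_le_unitriangular :
    (stepRep R ha).range ≤ unitriangular (Fin (n + 1)) R := by
  refine FreeGroup.range_lift_le ?_
  rintro _ ⟨x, rfl⟩
  simpa [mem_unitriangular] using stepMatrix_mem_strictlyUpperTriangular a x

theorem val_stepRep_prod_syllables_zero_last (e : Fin n → ℤ) :
    (stepRep R ha (List.ofFn fun i => FreeGroup.of (a i) ^ e i).prod).val 0 (Fin.last n) =
      ((∏ i, e i : ℤ) : R) := by
  let M (i : Fin n) : Matrix (Fin (n + 1)) (Fin (n + 1)) R := 1 + e i • stepMatrix R a (a i)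
  have image_eq : (stepRep R ha (List.ofFn fun i => FreeGroup.of (a i) ^ e i).prod).val =
      (List.ofFn M).prod := by
    rw [← Units.coeHom_apply, map_list_prod, map_list_prod, List.map_ofFn, List.map_ofFn]
    exact congrArg (fun f => (List.ofFn f).prod)
      (funext fun i => val_stepRep_of_zpow ha (a i) (e i))
  have hM (i : Fin n) : IsLowerHessenberg (M i) := fun j k hjk => by
    have hne : j ≠ k := by rintro rfl; omega
    simp only [M, Matrix.add_apply, Matrix.smul_apply, Matrix.one_apply_ne hne,
      stepMatrix_apply_of_ne a (a i) hjk.ne, smul_zero, add_zero]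
  have superdiagonal (i : Fin n) : M i i.castSucc i.succ = e i := by
    simp only [M, Matrix.add_apply, Matrix.smul_apply, Matrix.one_apply_ne i.castSucc_lt_succ.ne,
      stepMatrix_castSucc_succ, zero_add, zsmul_one]
  rw [image_eq, IsLowerHessenberg.ofFn_prod_apply hM (by simp), Int.cast_prod]
  refine Finset.prod_congr rfl fun i _ => ?_
  convert superdiagonal i using 2 <;> simp [Fin.ext_iff]

end Syllables

theorem exists_intCast_zmod_pow_ne_zero {p : ℕ} (hp : 1 < p) {z : ℤ} (hz : z ≠ 0) :
    ∃ m : ℕ, (z : ZMod (p ^ m)) ≠ 0 := by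
  refine ⟨z.natAbs, fun h => ?_⟩
  rw [ZMod.intCast_zmod_eq_zero_iff_dvd] at h
  exact hz (Int.eq_zero_of_dvd_of_natAbs_lt_natAbs h (by simpa using Nat.lt_pow_self hp))

theorem ResiduallyFiniteP.of_injective {p : ℕ} {G H : Type*} [Group G] [Group H] (hp : p.Prime)
    (hH : ResiduallyFiniteP p H) (f : G →* H) (hf : Function.Injective f) :
    ResiduallyFiniteP p G := by
  intro g hg
  obtain ⟨M, hM, ⟨k, hk⟩, hgM⟩ := hH (f g) ((map_ne_one_iff f hf).2 hg)
  refine ⟨M.comap f, hM.comap f, ?_, hgM⟩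
  have index_dvd : (M.comap f).index ∣ p ^ k := by
    rw [Subgroup.index_comap, ← hk]
    exact M.relIndex_dvd_index_of_normal _
  obtain ⟨j, -, hj⟩ := (Nat.dvd_prime_pow hp).1 index_dvd
  exact ⟨j, hj⟩

theorem residuallyFiniteP_freeGroup {p : ℕ} (hp : p.Prime) (α : Type*) :
    ResiduallyFiniteP p (FreeGroup α) := by
  intro g hg
  obtain ⟨n, a, e, ha, he, rfl⟩ := exists_syllables g
  obtain ⟨m, hm⟩ := exists_intCast_zmod_pow_ne_zero hp.one_lt
    (Finset.prod_ne_zero_iff (s := Finset.univ).2 fun i _ => he i)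
  have : Fact p.Prime := ⟨hp⟩
  have : NeZero (p ^ m) := ⟨(pow_pos hp.pos m).ne'⟩
  let ρ := stepRep (ZMod (p ^ m)) ha
  have hρ : IsPGroup p ρ.range :=
    (isPGroup_unitriangular (Nat.card_zmod _)).to_le (range_stepRep_le_unitriangular ha)
  have zero_ne_last : (0 : Fin (n + 1)) ≠ Fin.last n := by
    have : NeZero n := ⟨by rintro rfl; simp at hg⟩
    exact (Fin.last_pos' (n := n)).ne
  refine ⟨ρ.ker, inferInstance, ?_, fun hker => hm ?_⟩
  · rw [Subgroup.index_ker]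
    exact IsPGroup.iff_card.1 hρ
  · rw [← val_stepRep_prod_syllables_zero_last ha e, MonoidHom.mem_ker.1 hker]
    exact Matrix.one_apply_ne zero_ne_last

theorem isPGroup_quotient_normalCore {p k : ℕ} {G : Type*} [Group G] {M N : Subgroup G}
    [N.Normal] (hN : IsPGroup p (G ⧸ N)) (hM : ∀ x ∈ N, x ^ p ^ k ∈ M) :
    IsPGroup p (G ⧸ M.normalCore) := by
  intro q
  obtain ⟨x, rfl⟩ := QuotientGroup.mk_surjective q
  obtain ⟨j, hj⟩ := hN (x : G ⧸ N)
  refine ⟨j + k, ?_⟩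
  rw [← QuotientGroup.mk_pow, QuotientGroup.eq_one_iff] at hj ⊢
  intro g
  rw [pow_add, pow_mul, ← conj_pow]
  exact hM _ (‹N.Normal›.conj_mem _ hj g)

theorem stmt_8_general (p : ℕ) (hp : p.Prime) (G : Type*) [Group G]
    (N : Subgroup G) (hN : N.Normal) (hres : ResiduallyFiniteP p N)
    (hfin : Finite (G ⧸ N)) (hp' : IsPGroup p (G ⧸ N)) :
    ResiduallyFiniteP p G := by
  have : Fact p.Prime := ⟨hp⟩
  intro g hg
  by_cases hgN : g ∈ N
  swap
  · exact ⟨N, hN, IsPGroup.iff_card.1 hp', hgN⟩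
  obtain ⟨M, hM, ⟨k, hk⟩, hgM⟩ := hres ⟨g, hgN⟩ (by simpa using hg)
  let M' : Subgroup G := M.map N.subtype
  have : M'.FiniteIndex := ⟨by
    rw [Subgroup.index_map_subtype, hk]
    exact mul_ne_zero (pow_pos hp.pos k).ne' Nat.card_pos.ne'⟩
  have pow_mem (x : G) (hx : x ∈ N) : x ^ p ^ k ∈ M' :=
    ⟨⟨x, hx⟩ ^ p ^ k, hk ▸ M.pow_index_mem _, rfl⟩
  refine ⟨M'.normalCore, inferInstance,
    IsPGroup.iff_card.1 (isPGroup_quotient_normalCore hp' pow_mem), fun hcore => ?_⟩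
  obtain ⟨y, hy, rfl⟩ := M'.normalCore_le hcore
  exact hgM hy

theorem stmt_8 (p : ℕ) (hp : p.Prime) (G : Type*) [Group G]
    (N : Subgroup G) (hN : N.Normal) (hfree : IsFreeGroup N)
    (hfin : Finite (G ⧸ N)) (hp' : IsPGroup p (G ⧸ N)) :
    ResiduallyFiniteP p G :=
  stmt_8_general p hp G N hN
    ((residuallyFiniteP_freeGroup hp _).of_injective hp (IsFreeGroup.toFreeGroup N).toMonoidHom
      (IsFreeGroup.toFreeGroup N).injective) hfin hp'
end

section
/- Let K be a finite p-group and φᵢ: Aᵢ → Bᵢ isomorphisms between subgroups of K for i = 1,…,n, and let G be the multiple HNN-extension G = ⟨K, t₁,…,tₙ | tᵢ a tᵢ⁻¹ = φᵢ(a) for all a ∈ Aᵢ⟩. If each φᵢ extends to an automorphism θᵢ of K such that ⟨θ₁,…,θₙ⟩ ≤ Aut(K) is a finite p-group, then G is residually a finite p-group. -/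
/-!
Let `P` be the group generated by the `θᵢ` and `X = K ⋊ P`. Inside `X` the isomorphism `φᵢ` is
conjugation by `θᵢ`, so `tᵢ ↦ tᵢ θᵢ` maps the multiple HNN extension `G` of `K` to the HNN extension
of `X` whose stable letters merely centralize the `Bᵢ`. The latter acts on `P × G`, the underlying
set of the action of `X` induced from the left multiplication of `K` on `G`, and the image of `g`
moves `(1, 1)` to `(1, g)`; hence `G` embeds.

An HNN extension of `X` with centralizing stable letters is the semidirect product by `X` of a free
group. Free groups are residually finite-`q` for every prime `q`: a reduced word labels a path, and
the unitriangular matrices over `𝔽_q` moving one step along the edges with a given label do not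
kill it. An extension of a residually finite-`p` group by a finite `p`-group is again residually
finite-`p`, as one sees by taking normal cores.
-/

universe u v

/-- A group is residually finite-`p` if every nontrivial element lies outside some normal subgroup
of finite index whose quotient is a `p`-group. -/
def IsResiduallyFinitePGroup (p : ℕ) (G : Type*) [Group G] : Prop :=
  ∀ g : G, g ≠ 1 → ∃ N : FiniteIndexNormalSubgroup G, IsPGroup p (G ⧸ N.toSubgroup) ∧ g ∉ N

theorem isPGroup_quotient_normalCore_map_subtype_ker {p : ℕ} {G Q : Type*} [Group G] [Group Q]
    [Finite Q] (hQ : IsPGroup p Q) (f : G →* Q) (N : Subgroup f.ker) [N.Normal] [N.FiniteIndex]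
    (hN : IsPGroup p (f.ker ⧸ N)) :
    IsPGroup p (G ⧸ (N.map f.ker.subtype).normalCore) := by
  obtain ⟨a, ha⟩ := isPGroup_iff_exists_pow_pow_eq_one.1 hQ
  obtain ⟨b, hb⟩ := isPGroup_iff_exists_pow_pow_eq_one.1 hN
  have pow_mem (k : f.ker) : k ^ p ^ b ∈ N := (QuotientGroup.eq_one_iff _).1 (hb k)
  refine isPGroup_iff_pow_pow_eq_one.2 fun x ↦ ⟨a + b, ?_⟩
  obtain ⟨g, rfl⟩ := QuotientGroup.mk_surjective x
  rw [← QuotientGroup.mk_pow, QuotientGroup.eq_one_iff]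
  intro c
  have conj_mem : c * g ^ p ^ a * c⁻¹ ∈ f.ker := by
    simp [MonoidHom.mem_ker, ha]
  refine ⟨_, pow_mem ⟨_, conj_mem⟩, ?_⟩
  simp [conj_pow, pow_add, pow_mul]

namespace IsResiduallyFinitePGroup

variable {p : ℕ} {G H Q : Type*} [Group G] [Group H] [Group Q]

theorem exists_of_hom [Finite Q] (hQ : IsPGroup p Q) (f : G →* Q) {g : G} (hg : f g ≠ 1) :
    ∃ N : FiniteIndexNormalSubgroup G, IsPGroup p (G ⧸ N.toSubgroup) ∧ g ∉ N :=
  ⟨.ofSubgroup f.ker, hQ.of_injective _ (QuotientGroup.kerLift_injective f), hg⟩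

theorem of_injective (f : G →* H) (hf : Function.Injective f)
    (hH : IsResiduallyFinitePGroup p H) : IsResiduallyFinitePGroup p G := fun g hg ↦ by
  obtain ⟨N, hN, hgN⟩ := hH (f g) ((map_ne_one_iff f hf).2 hg)
  exact exists_of_hom hN ((QuotientGroup.mk' N.toSubgroup).comp f)
    (mt (QuotientGroup.eq_one_iff (N := N.toSubgroup) (f g)).1 hgN)

theorem mono {q : ℕ} (hqp : q ∣ p) (hG : IsResiduallyFinitePGroup q G) :
    IsResiduallyFinitePGroup p G := fun g hg ↦
  (hG g hg).imp fun _ hN ↦ hN.imp_left (IsPGroup.mono hqp)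

theorem of_ker [Finite Q] (hQ : IsPGroup p Q) (f : G →* Q)
    (hf : IsResiduallyFinitePGroup p f.ker) : IsResiduallyFinitePGroup p G := fun g hg ↦ by
  by_cases hfg : f g = 1
  · obtain ⟨N, hN, hgN⟩ := hf ⟨g, hfg⟩ (by simpa [Subtype.ext_iff] using hg)
    have : (N.toSubgroup.map f.ker.subtype).FiniteIndex :=
      ⟨by simp [Subgroup.index_map_subtype, Subgroup.FiniteIndex.index_ne_zero]⟩
    refine ⟨.ofSubgroup (N.toSubgroup.map f.ker.subtype).normalCore,
      isPGroup_quotient_normalCore_map_subtype_ker hQ f _ hN, fun hmem ↦ hgN ?_⟩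
    obtain ⟨k, hk, hkg⟩ := Subgroup.normalCore_le _ hmem
    rwa [← show k = ⟨g, hfg⟩ from Subtype.ext hkg]
  · exact exists_of_hom hQ f hfg

end IsResiduallyFinitePGroup

section Unitriangular

open Matrix

theorem mul_apply_self_of_isUpperTriangular {n R : Type*} [Fintype n] [LinearOrder n]
    [NonUnitalNonAssocSemiring R] {M N : Matrix n n R} (hM : M.IsUpperTriangular)
    (hN : N.IsUpperTriangular) (i : n) : (M * N) i i = M i i * N i i := by
  rw [mul_apply, Finset.sum_eq_single i _ (by simp)]
  intro j _ hji
  rcases hji.lt_or_gt with h | h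
  · rw [hM h, zero_mul]
  · rw [hN h, mul_zero]

/-- The group of upper triangular matrices with ones on the diagonal. -/
def unitriangularGroup (n R : Type*) [Fintype n] [LinearOrder n] [CommRing R] :
    Subgroup (GL n R) where
  carrier := {M | M.val.IsUpperTriangular ∧ ∀ i, M.val i i = 1}
  one_mem' := ⟨blockTriangular_one, fun i ↦ one_apply_eq i⟩
  mul_mem' {M N} hM hN := ⟨hM.1.mul hN.1, fun i ↦ by
    rw [Units.val_mul, mul_apply_self_of_isUpperTriangular hM.1 hN.1, hM.2, hN.2, one_mul]⟩
  inv_mem' {M} hM := by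
    have hinv : (M⁻¹).val.IsUpperTriangular := by
      have := M.invertible
      rw [coe_units_inv]
      exact blockTriangular_inv_of_blockTriangular hM.1
    refine ⟨hinv, fun i ↦ ?_⟩
    calc M⁻¹.val i i
      _ = (M.val * M⁻¹.val) i i := by
        rw [mul_apply_self_of_isUpperTriangular hM.1 hinv, hM.2, one_mul]
      _ = 1 := by rw [M.mul_inv, one_apply_eq]

/-- A vector has leading index `t` if its entry at `t` is `1` and all later entries vanish. -/
def HasLeadingIndex {n R : Type*} [LT n] [Zero R] [One R] (x : n → R) (t : n) : Prop :=
  x t = 1 ∧ ∀ s > t, x s = 0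

variable {n R : Type*} [Fintype n] [LinearOrder n] [CommRing R]

namespace unitriangularGroup

/-- A unitriangular matrix as an element of the unitriangular group. -/
noncomputable def mk (M : Matrix n n R) (hM : M.IsUpperTriangular) (hdiag : ∀ i, M i i = 1) :
    unitriangularGroup n R :=
  ⟨.mk'' M (by simp [det_of_isUpperTriangular hM, hdiag]), hM, hdiag⟩

theorem sub_one_pow_card {M : GL n R} (hM : M ∈ unitriangularGroup n R) :
    (M.val - 1) ^ Fintype.card n = 0 := by
  simpa [charpoly_of_isUpperTriangular _ hM.1, hM.2] using M.val.aeval_self_charpoly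

theorem isPGroup (p : ℕ) [Fact p.Prime] [CharP R p] : IsPGroup p (unitriangularGroup n R) := by
  refine isPGroup_iff_pow_pow_eq_one.2 fun M ↦ ⟨Fintype.card n, Subtype.ext (Units.ext ?_)⟩
  rcases isEmpty_or_nonempty n
  · exact Subsingleton.elim _ _
  have hpow : (M.val.val - 1) ^ p ^ Fintype.card n = 0 :=
    pow_eq_zero_of_le (Nat.lt_pow_self (Fact.out : p.Prime).one_lt).le (sub_one_pow_card M.2)
  rwa [sub_pow_char_pow_of_commute p _ (Commute.one_right _), one_pow, sub_eq_zero] at hpow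

end unitriangularGroup

theorem HasLeadingIndex.vecMul_inv [Finite R] {M : unitriangularGroup n R} {t : n}
    (hM : ∀ x, HasLeadingIndex x t → HasLeadingIndex (x ᵥ* M.val.val) t) {x : n → R}
    (hx : HasLeadingIndex x t) : HasLeadingIndex (x ᵥ* (M⁻¹).val.val) t := by
  obtain ⟨j, hj⟩ : M⁻¹ ∈ (Submonoid.powers M : Set (unitriangularGroup n R)) := by
    simp [powers_eq_zpowers]
  rw [← hj]
  clear hj
  induction j with
  | zero => simpa using hx
  | succ j ih => simpa [pow_succ, ← vecMul_vecMul] using hM _ ih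

variable {k : ℕ} {L : Type*} [DecidableEq L]

/-- For a path `0 → 1 → ⋯ → k` whose edges are labelled by `ℓ`, the matrix which adds to the
identity the adjacency matrix of the edges labelled `c`. -/
noncomputable def pathMatrix (R : Type*) [CommRing R] (ℓ : Fin k → L) (c : L) :
    unitriangularGroup (Fin (k + 1)) R :=
  unitriangularGroup.mk (1 + ∑ e with ℓ e = c, single e.castSucc e.succ 1)
    (mem_blockTriangularSubsemiring.1 <| add_mem (one_mem _) <| sum_mem fun _ _ ↦
      blockTriangular_single Fin.castSucc_lt_succ.le 1)
    fun i ↦ by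
      have hzero (e : Fin k) : single e.castSucc e.succ (1 : R) i i = 0 :=
        single_apply_of_ne _ _ _ _ _ fun h ↦ Fin.castSucc_lt_succ.ne (h.1.trans h.2.symm)
      simp [Matrix.sum_apply, hzero]

theorem vecMul_pathMatrix (ℓ : Fin k → L) (c : L) (x : Fin (k + 1) → R) :
    x ᵥ* (pathMatrix R ℓ c).val.val = x + ∑ e with ℓ e = c, Pi.single e.succ (x e.castSucc) := by
  have vecMul_single (i j : Fin (k + 1)) : x ᵥ* single i j 1 = Pi.single j (x i) := by
    ext s
    simp [vecMul, dotProduct, single_apply, Pi.single_apply, eq_comm, ite_and]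
  change x ᵥ* (1 + ∑ e with ℓ e = c, single e.castSucc e.succ 1) = _
  simp only [vecMul_add, vecMul_one, vecMul_sum, vecMul_single]

theorem vecMul_pathMatrix_zero (ℓ : Fin k → L) (c : L) (x : Fin (k + 1) → R) :
    (x ᵥ* (pathMatrix R ℓ c).val.val) 0 = x 0 := by
  simp [vecMul_pathMatrix, Finset.sum_apply, eq_comm]

theorem vecMul_pathMatrix_succ (ℓ : Fin k → L) (c : L) (x : Fin (k + 1) → R) (e : Fin k) :
    (x ᵥ* (pathMatrix R ℓ c).val.val) e.succ =
      x e.succ + if ℓ e = c then x e.castSucc else 0 := by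
  simp [vecMul_pathMatrix, Finset.sum_apply, Pi.single_apply]

theorem HasLeadingIndex.vecMul_pathMatrix_succ {ℓ : Fin k → L} {e : Fin k} {x : Fin (k + 1) → R}
    (hx : HasLeadingIndex x e.castSucc) :
    HasLeadingIndex (x ᵥ* (pathMatrix R ℓ (ℓ e)).val.val) e.succ := by
  constructor
  · simp [_root_.vecMul_pathMatrix_succ, hx.1, hx.2 _ Fin.castSucc_lt_succ]
  · intro s hs
    cases s using Fin.cases with
    | zero => simp at hs
    | succ e' =>
      rw [_root_.vecMul_pathMatrix_succ, hx.2 _ (Fin.castSucc_lt_succ.trans hs),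
        hx.2 e'.castSucc (Fin.succ_lt_succ_iff.1 hs), ite_self, add_zero]

theorem HasLeadingIndex.vecMul_pathMatrix {ℓ : Fin k → L} {c : L} {t : Fin (k + 1)}
    (hin : ∀ e, e.succ = t → ℓ e ≠ c) (hout : ∀ e, e.castSucc = t → ℓ e ≠ c)
    {x : Fin (k + 1) → R} (hx : HasLeadingIndex x t) :
    HasLeadingIndex (x ᵥ* (pathMatrix R ℓ c).val.val) t := by
  constructor
  · cases t using Fin.cases with
    | zero => rw [vecMul_pathMatrix_zero, hx.1]
    | succ e => rw [_root_.vecMul_pathMatrix_succ, if_neg (hin e rfl), hx.1, add_zero]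
  · intro s hs
    cases s using Fin.cases with
    | zero => simp at hs
    | succ e =>
      rw [_root_.vecMul_pathMatrix_succ, hx.2 _ hs, zero_add, ite_eq_right_iff]
      intro he
      exact hx.2 _ ((Fin.le_castSucc_iff.2 hs).lt_of_ne fun h ↦ hout e h.symm he)

/-- The representation of the free group attached to a path with edges labelled by letters, sending
a generator `a` to `M_a M_{a⁻¹}⁻¹`, where `M_c` is the path matrix of the letter `c`. -/
noncomputable def pathRep {α : Type*} [DecidableEq α] (R : Type*) [CommRing R]
    (ℓ : Fin k → α × Bool) : FreeGroup α →* unitriangularGroup (Fin (k + 1)) R :=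
  FreeGroup.lift fun a ↦ pathMatrix R ℓ (a, true) * (pathMatrix R ℓ (a, false))⁻¹

section pathRep

variable {α : Type*} [DecidableEq α]

theorem pathRep_mk_singleton (ℓ : Fin k → α × Bool) (a : α) (b : Bool) :
    pathRep R ℓ (.mk [(a, b)]) = pathMatrix R ℓ (a, b) * (pathMatrix R ℓ (a, !b))⁻¹ := by
  cases b <;> simp [pathRep]

theorem HasLeadingIndex.vecMul_pathRep_mk_singleton [Finite R] {l : List (α × Bool)}
    (hl : FreeGroup.IsReduced l) (e : Fin l.length) {x : Fin (l.length + 1) → R}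
    (hx : HasLeadingIndex x e.castSucc) :
    HasLeadingIndex (x ᵥ* (pathRep R l.get (.mk [l.get e])).val.val) e.succ := by
  rw [← Prod.mk.eta (p := l.get e), pathRep_mk_singleton, Subgroup.coe_mul, Units.val_mul,
    ← vecMul_vecMul]
  refine vecMul_inv (fun y ↦ vecMul_pathMatrix ?_ ?_) hx.vecMul_pathMatrix_succ
  · intro e' he' h
    simp [Fin.succ_inj.1 he', Prod.ext_iff] at h
  · intro e' he' h
    have hlt : e.val + 1 = e'.val := by simpa [Fin.ext_iff, eq_comm] using he'
    have hnoncancelling : (l.get e).1 = (l.get e').1 → (l.get e).2 = (l.get e').2 := by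
      simpa only [← hlt, List.get_eq_getElem] using hl.getElem e (by omega)
    rw [h] at hnoncancelling
    simp at hnoncancelling

theorem hasLeadingIndex_vecMul_pathRep_take [Finite R] {l : List (α × Bool)}
    (hl : FreeGroup.IsReduced l) (t : Fin (l.length + 1)) :
    HasLeadingIndex (Pi.single 0 1 ᵥ* (pathRep R l.get (.mk (l.take t))).val.val) t := by
  induction t using Fin.induction with
  | zero =>
    simp only [Fin.val_zero, List.take_zero, ← FreeGroup.one_eq_mk, map_one, Subgroup.coe_one,
      Units.val_one, vecMul_one]
    exact ⟨Pi.single_eq_same _ _, fun s hs ↦ Pi.single_eq_of_ne hs.ne' _⟩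
  | succ e ih =>
    have htake : l.take e.succ = l.take e.castSucc ++ [l.get e] := by simp
    rw [htake, ← FreeGroup.mul_mk, map_mul, Subgroup.coe_mul, Units.val_mul, ← vecMul_vecMul]
    exact ih.vecMul_pathRep_mk_singleton hl e

theorem pathRep_toWord_ne_one [Finite R] [Nontrivial R] {g : FreeGroup α} (hg : g ≠ 1) :
    pathRep R g.toWord.get g ≠ 1 := by
  intro h
  have hlead := hasLeadingIndex_vecMul_pathRep_take (R := R) g.isReduced_toWord (Fin.last _)
  have hlast : Fin.last g.toWord.length ≠ 0 := by simpa [Fin.ext_iff] using hg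
  simpa [FreeGroup.mk_toWord, h, hlast] using hlead.1

end pathRep

end Unitriangular

theorem IsResiduallyFinitePGroup.freeGroup {p : ℕ} (hp : p ≠ 1) (α : Type*) :
    IsResiduallyFinitePGroup p (FreeGroup α) := by
  classical
  have : Fact p.minFac.Prime := ⟨Nat.minFac_prime hp⟩
  refine mono p.minFac_dvd fun g hg ↦ ?_
  exact exists_of_hom (unitriangularGroup.isPGroup p.minFac) _
    (pathRep_toWord_ne_one (R := ZMod p.minFac) hg)

/-- The action of permutations of the generators on a free group. -/
def freeGroupPermHom (E : Type*) : Equiv.Perm E →* MulAut (FreeGroup E) where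
  toFun := FreeGroup.freeGroupCongr
  map_one' := FreeGroup.freeGroupCongr_refl
  map_mul' σ τ := (FreeGroup.freeGroupCongr_trans τ σ).symm

section CentralHNN

variable {ι X M : Type*} [Group X] [Group M]

/-- The HNN extension of `X` with stable letters `t i` centralizing `H i`. The conjugates of `t i`
by elements of `X` correspond to the cosets of `H i`, so this is the semidirect product by `X` of
the free group on all these cosets. -/
abbrev CentralHNN (H : ι → Subgroup X) : Type _ :=
  FreeGroup (Σ i, X ⧸ H i) ⋊[(freeGroupPermHom _).comp (MulAction.toPermHom X _)] X

namespace CentralHNN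

variable {H : ι → Subgroup X}

/-- The stable letter of a central HNN extension. -/
def t (H : ι → Subgroup X) (i : ι) : CentralHNN H :=
  .inl (.of ⟨i, (1 : X)⟩)

theorem inr_mul_t_mul_inv (i : ι) (x : X) :
    .inr x * t H i * (.inr x)⁻¹ = SemidirectProduct.inl (.of ⟨i, (x : X ⧸ H i)⟩) := by
  rw [t, ← map_inv, ← SemidirectProduct.inl_aut]
  simp [freeGroupPermHom]

theorem commute_t_inr {i : ι} {h : X} (hh : h ∈ H i) : Commute (t H i) (.inr h) := by
  refine .symm (mul_inv_eq_iff_eq_mul.1 ?_)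
  rw [inr_mul_t_mul_inv, t, (QuotientGroup.eq (s := H i) (a := h) (b := 1)).2 (by simpa using hh)]

/-- The conjugates of elements `r i` centralizing the images of `H i`, indexed by cosets. -/
def conj (ρ : X →* M) (r : ι → M) (hr : ∀ i, ∀ h ∈ H i, Commute (r i) (ρ h)) :
    (Σ i, X ⧸ H i) → M := fun e ↦
  Quotient.liftOn' e.2 (fun x ↦ ρ x * r e.1 * (ρ x)⁻¹) fun x y hxy ↦ by
    have hcomm := (hr e.1 _ (QuotientGroup.leftRel_apply.1 hxy)).eq
    rw [map_mul, map_inv] at hcomm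
    calc ρ x * r e.1 * (ρ x)⁻¹
      _ = ρ x * (r e.1 * ((ρ x)⁻¹ * ρ y)) * (ρ y)⁻¹ := by group
      _ = ρ y * r e.1 * (ρ y)⁻¹ := by rw [hcomm]; group

/-- The homomorphism induced by a homomorphism on the base group and images of the stable letters
centralizing the images of the `H i`. -/
def lift (ρ : X →* M) (r : ι → M) (hr : ∀ i, ∀ h ∈ H i, Commute (r i) (ρ h)) :
    CentralHNN H →* M :=
  SemidirectProduct.lift (FreeGroup.lift (conj ρ r hr)) ρ fun x ↦ by
    ext ⟨i, c⟩
    induction c using QuotientGroup.induction_on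
    simp [freeGroupPermHom, conj, mul_assoc]

variable (ρ : X →* M) (r : ι → M) (hr : ∀ i, ∀ h ∈ H i, Commute (r i) (ρ h))

@[simp]
theorem lift_t (i : ι) : lift ρ r hr (t H i) = r i := by
  simp [lift, t, conj]

@[simp]
theorem lift_inr (x : X) : lift ρ r hr (.inr x) = ρ x :=
  SemidirectProduct.lift_inr ..

theorem isResiduallyFinitePGroup {p : ℕ} (hp : p ≠ 1) [Finite X] (hX : IsPGroup p X)
    (H : ι → Subgroup X) : IsResiduallyFinitePGroup p (CentralHNN H) := by
  refine .of_ker hX SemidirectProduct.rightHom ?_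
  rw [← SemidirectProduct.range_inl_eq_ker_rightHom]
  exact .of_injective (MonoidHom.ofInjective SemidirectProduct.inl_injective).symm.toMonoidHom
    (MulEquiv.injective _) (.freeGroup hp _)

end CentralHNN

end CentralHNN

section MultipleHNN

variable {K : Type u} [Group K] {ι : Type v} {A B : ι → Subgroup K}

/-- The relators of the multiple HNN extension, on generators the elements of `K` and the stable
letters: the multiplication table of `K`, and `tᵢ a tᵢ⁻¹ = φᵢ a` for `a ∈ A i`. -/
def hnnRelators (φ : ∀ i, A i ≃* B i) : Set (FreeGroup (K ⊕ ι)) :=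
  {w | (∃ k k' : K, w = FreeGroup.of (Sum.inl k) * FreeGroup.of (Sum.inl k') *
      (FreeGroup.of (Sum.inl (k * k')))⁻¹) ∨
    (∃ (i : ι) (a : K) (ha : a ∈ A i),
      w = FreeGroup.of (Sum.inr i) * FreeGroup.of (Sum.inl a) *
        (FreeGroup.of (Sum.inr i))⁻¹ *
        (FreeGroup.of (Sum.inl ((φ i ⟨a, ha⟩ : B i) : K)))⁻¹)}

/-- The multiple HNN extension `⟨K, tᵢ | tᵢ a tᵢ⁻¹ = φᵢ a for a ∈ A i⟩`. -/
abbrev MultipleHNNExtension (φ : ∀ i, A i ≃* B i) : Type (max u v) :=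
  PresentedGroup (hnnRelators φ)

namespace MultipleHNNExtension

variable {φ : ∀ i, A i ≃* B i} {M : Type*} [Group M]

/-- The canonical homomorphism from the base group. -/
def of (φ : ∀ i, A i ≃* B i) : K →* MultipleHNNExtension φ :=
  .mk' (fun k ↦ PresentedGroup.of (.inl k)) fun k k' ↦
    .symm (PresentedGroup.mk_eq_mk_of_mul_inv_mem (.inl ⟨k, k', rfl⟩))

/-- The stable letters. -/
def t (φ : ∀ i, A i ≃* B i) (i : ι) : MultipleHNNExtension φ :=
  PresentedGroup.of (.inr i)

theorem t_mul_of (i : ι) (a : A i) : t φ i * of φ a = of φ (φ i a) * t φ i :=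
  mul_inv_eq_iff_eq_mul.1 (PresentedGroup.mk_eq_mk_of_mul_inv_mem (.inr ⟨i, a, a.2, rfl⟩))

/-- The homomorphism induced by a homomorphism on the base group and compatible images of the
stable letters. -/
def lift (f : K →* M) (x : ι → M) (hx : ∀ i (a : A i), x i * f a = f (φ i a) * x i) :
    MultipleHNNExtension φ →* M :=
  PresentedGroup.toGroup (f := Sum.elim f x) <| by
    rintro _ (⟨k, k', rfl⟩ | ⟨i, a, ha, rfl⟩)
    · simp
    · simp [hx i ⟨a, ha⟩]

section lift

variable (f : K →* M) (x : ι → M) (hx : ∀ i (a : A i), x i * f a = f (φ i a) * x i)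

@[simp]
theorem lift_of (k : K) : lift f x hx (of φ k) = f k :=
  PresentedGroup.toGroup.of _

@[simp]
theorem lift_t (i : ι) : lift f x hx (t φ i) = x i :=
  PresentedGroup.toGroup.of _

end lift

theorem closure_range_of_union_range_t :
    Subgroup.closure (Set.range (of φ) ∪ Set.range (t φ)) = ⊤ := by
  rw [← PresentedGroup.closure_range_of, ← Set.Sum.elim_range]
  congr 2
  ext (k | i) <;> rfl

end MultipleHNNExtension

end MultipleHNN

section Induced

variable {K P G : Type*} [Group K] [Group P] [Group G] (α : P →* MulAut K) (f : K →* G)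

/-- The action of `K ⋊[α] P` induced from the left multiplication of `K` on `G` through `f`. Its
underlying set is `P × G`, where `(π, g)` stands for the class of `(inr π, g)` in
`(K ⋊[α] P) ×_K G`. -/
def inducedPerm : K ⋊[α] P →* Equiv.Perm (P × G) where
  toFun x := (Equiv.mulLeft x.right).prodShear fun π ↦
    Equiv.mulLeft (f (α (x.right * π)⁻¹ x.left))
  map_one' := by ext <;> simp
  map_mul' x y := by
    ext1 ⟨π, g⟩
    have hα : α (x.right * y.right * π)⁻¹ (α x.right y.left) = α (y.right * π)⁻¹ y.left := by
      rw [← MulAut.mul_apply, ← map_mul]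
      group
    refine Prod.ext (mul_assoc _ _ _) ?_
    change f (α (x.right * y.right * π)⁻¹ (x.left * α x.right y.left)) * g =
      f (α (x.right * (y.right * π))⁻¹ x.left) * (f (α (y.right * π)⁻¹ y.left) * g)
    rw [map_mul, hα, map_mul, mul_assoc, mul_assoc x.right]

@[simp]
theorem inducedPerm_inl_apply (k : K) (π : P) (g : G) :
    inducedPerm α f (.inl k) (π, g) = (π, f (α π⁻¹ k) * g) := by
  simp [inducedPerm, -map_inv]

@[simp]
theorem inducedPerm_inr_apply (σ π : P) (g : G) :
    inducedPerm α f (.inr σ) (π, g) = (σ * π, g) := by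
  simp [inducedPerm]

open Classical in
/-- The permutation of `P × G` interchanging `(s, g)` with `(1, t * g)` and fixing the points with
first coordinate different from `s` and `1`. -/
noncomputable def stablePerm (s : P) (t : G) : Equiv.Perm (P × G) :=
  (Equiv.swap s 1).prodShear fun π ↦
    Equiv.mulLeft (if π = s then t else if π = 1 then t⁻¹ else 1)

theorem stablePerm_apply_self (s : P) (t g : G) : stablePerm s t (s, g) = (1, t * g) := by
  simp [stablePerm]

theorem stablePerm_apply_one {s : P} (hs : s ≠ 1) (t g : G) :
    stablePerm s t (1, g) = (s, t⁻¹ * g) := by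
  simp [stablePerm, hs.symm]

theorem stablePerm_apply_of_ne {s π : P} (hs : π ≠ s) (h1 : π ≠ 1) (t g : G) :
    stablePerm s t (π, g) = (π, g) := by
  simp [stablePerm, hs, h1, Equiv.swap_apply_of_ne_of_ne]

theorem commute_stablePerm_inducedPerm_inl {s : P} {t : G} {k : K}
    (h : t * f (α s⁻¹ k) = f k * t) :
    Commute (stablePerm s t) (inducedPerm α f (.inl k)) := by
  ext1 ⟨π, g⟩
  simp only [Equiv.Perm.mul_apply, inducedPerm_inl_apply]
  by_cases hs : π = s
  · subst hs
    simp [stablePerm_apply_self, ← mul_assoc, h, -map_inv]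
  by_cases h1 : π = 1
  · subst h1
    have h' : t⁻¹ * f k = f (α s⁻¹ k) * t⁻¹ := by
      rw [inv_mul_eq_iff_eq_mul, ← mul_assoc, h, mul_inv_cancel_right]
    simp [stablePerm_apply_one (Ne.symm hs), ← mul_assoc, h', -map_inv]
  · simp only [stablePerm_apply_of_ne hs h1, inducedPerm_inl_apply]

end Induced

theorem isPGroup_semidirectProduct {p : ℕ} {N P : Type*} [Group N] [Group P] {α : P →* MulAut N}
    (hN : IsPGroup p N) (hP : IsPGroup p P) : IsPGroup p (N ⋊[α] P) := by
  have hker : IsPGroup p (SemidirectProduct.rightHom : N ⋊[α] P →* P).ker := by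
    rw [← SemidirectProduct.range_inl_eq_ker_rightHom]
    exact hN.of_surjective _ SemidirectProduct.inl.rangeRestrict_surjective
  have := (hP.to_subgroup ⊤).comap_of_ker_isPGroup _ hker
  rw [Subgroup.comap_top] at this
  exact this.of_equiv Subgroup.topEquiv

section Embedding

open SemidirectProduct (inl inr)

variable {K P : Type*} [Group K] [Group P] {ι : Type*} {A B : ι → Subgroup K}
  {φ : ∀ i, A i ≃* B i} {α : P →* MulAut K} {s : ι → P}

namespace MultipleHNNExtension

/-- If `s i` acts on `K` as an extension of `φ i`, the multiple HNN extension of `K` maps to the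
central HNN extension of `K ⋊[α] P` by `tᵢ ↦ tᵢ sᵢ`. -/
def toCentralHNN (φ : ∀ i, A i ≃* B i) (α : P →* MulAut K) (s : ι → P)
    (hs : ∀ i (a : A i), α (s i) a = φ i a) :
    MultipleHNNExtension φ →* CentralHNN fun i ↦ (B i).map (inl : K →* K ⋊[α] P) :=
  lift (inr.comp inl) (fun i ↦ CentralHNN.t _ i * inr (inr (s i))) fun i a ↦ by
    have hcomm := CentralHNN.commute_t_inr (H := fun i ↦ (B i).map (inl : K →* K ⋊[α] P))
      (Subgroup.mem_map_of_mem (inl : K →* K ⋊[α] P) (φ i a).2)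
    have hconj : inr (s i) * inl (a : K) = (inl (φ i a : K) * inr (s i) : K ⋊[α] P) := by
      rw [← hs, SemidirectProduct.inl_aut, map_inv, inv_mul_cancel_right]
    rw [MonoidHom.comp_apply, mul_assoc, ← map_mul, hconj, map_mul, ← mul_assoc, hcomm.eq,
      mul_assoc, MonoidHom.comp_apply]

/-- The action of the central HNN extension of `K ⋊[α] P` on `P × MultipleHNNExtension φ`,
extending the induced action of `K ⋊[α] P`. -/
noncomputable def centralHNNPerm (φ : ∀ i, A i ≃* B i) (α : P →* MulAut K) (s : ι → P)
    (hs : ∀ i (a : A i), α (s i) a = φ i a) :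
    CentralHNN (fun i ↦ (B i).map (inl : K →* K ⋊[α] P)) →*
      Equiv.Perm (P × MultipleHNNExtension φ) :=
  CentralHNN.lift (inducedPerm α (of φ)) (fun i ↦ stablePerm (s i) (t φ i)) <| by
    rintro i _ ⟨b, hb, rfl⟩
    obtain ⟨a, rfl⟩ : ∃ a : A i, (φ i a : K) = b := ⟨(φ i).symm ⟨b, hb⟩, by simp⟩
    apply commute_stablePerm_inducedPerm_inl
    rw [← hs, ← MulAut.mul_apply, ← map_mul, inv_mul_cancel, map_one, MulAut.one_apply, hs,
      t_mul_of]

theorem centralHNNPerm_toCentralHNN_apply (hs : ∀ i (a : A i), α (s i) a = φ i a)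
    (g h : MultipleHNNExtension φ) :
    centralHNNPerm φ α s hs (toCentralHNN φ α s hs g) (1, h) = (1, g * h) := by
  induction (closure_range_of_union_range_t (φ := φ)).ge (Subgroup.mem_top g)
    using Subgroup.closure_induction generalizing h with
  | mem g hg =>
    rcases hg with ⟨k, rfl⟩ | ⟨i, rfl⟩
    · simp [centralHNNPerm, toCentralHNN]
    · simp [centralHNNPerm, toCentralHNN, stablePerm_apply_self]
  | one => simp
  | mul g₁ g₂ _ _ ih₁ ih₂ => simp [ih₁, ih₂, mul_assoc]
  | inv g _ ih =>
    rw [map_inv, map_inv, Equiv.Perm.inv_eq_iff_eq, ih, mul_inv_cancel_left]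

theorem toCentralHNN_injective (hs : ∀ i (a : A i), α (s i) a = φ i a) :
    Function.Injective (toCentralHNN φ α s hs) := by
  refine (injective_iff_map_eq_one _).2 fun g hg ↦ ?_
  simpa [hg] using (centralHNNPerm_toCentralHNN_apply hs g 1).symm

theorem isResiduallyFinitePGroup {p : ℕ} (hp : p ≠ 1) [Finite K] [Finite P] (hK : IsPGroup p K)
    (hP : IsPGroup p P) (hs : ∀ i (a : A i), α (s i) a = φ i a) :
    IsResiduallyFinitePGroup p (MultipleHNNExtension φ) :=
  have : Finite (K ⋊[α] P) := .of_equiv _ SemidirectProduct.equivProd.symm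
  .of_injective _ (toCentralHNN_injective hs)
    (CentralHNN.isResiduallyFinitePGroup hp (isPGroup_semidirectProduct hK hP) _)

end MultipleHNNExtension

end Embedding

theorem stmt_9_general {p : ℕ} (hp : p ≠ 1) {K : Type u} [Group K] [Finite K] (hK : IsPGroup p K)
    {ι : Type v} {A B : ι → Subgroup K} (φ : ∀ i, A i ≃* B i) (θ : ι → MulAut K)
    (hext : ∀ i (a : A i), θ i (a : K) = φ i a)
    (hθ : IsPGroup p (Subgroup.closure (Set.range θ))) :
    IsResiduallyFinitePGroup p (MultipleHNNExtension φ) :=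
  MultipleHNNExtension.isResiduallyFinitePGroup hp hK hθ
    (α := (Subgroup.closure (Set.range θ)).subtype)
    (s := fun i ↦ ⟨θ i, Subgroup.subset_closure ⟨i, rfl⟩⟩) hext

theorem stmt_9 (p : ℕ) (hp : p.Prime) (K : Type) [Group K] [Finite K]
    (hK : IsPGroup p K) (n : ℕ) (A B : Fin n → Subgroup K)
    (φ : ∀ i, (A i) ≃* (B i)) (θ : Fin n → MulAut K)
    (hext : ∀ i (a : A i), θ i (a : K) = ((φ i a : B i) : K))
    (hθ : IsPGroup p (Subgroup.closure (Set.range θ) : Subgroup (MulAut K)))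
    (g : PresentedGroup
      ({w : FreeGroup (K ⊕ Fin n) |
          (∃ k k' : K, w = FreeGroup.of (Sum.inl k) * FreeGroup.of (Sum.inl k') *
            (FreeGroup.of (Sum.inl (k * k')))⁻¹) ∨
          (∃ (i : Fin n) (a : K) (ha : a ∈ A i),
            w = FreeGroup.of (Sum.inr i) * FreeGroup.of (Sum.inl a) *
              (FreeGroup.of (Sum.inr i))⁻¹ *
              (FreeGroup.of (Sum.inl ((φ i ⟨a, ha⟩ : B i) : K)))⁻¹)}))
    (hg : g ≠ 1) :
    ∃ (Q : Type) (_ : Group Q) (f : _ →* Q), Finite Q ∧ IsPGroup p Q ∧ f g ≠ 1 := by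
  obtain ⟨N, hN, hgN⟩ := stmt_9_general hp.ne_one hK φ θ hext hθ g hg
  exact ⟨_, _, QuotientGroup.mk' N.toSubgroup, inferInstance, hN,
    mt (QuotientGroup.eq_one_iff (N := N.toSubgroup) g).1 hgN⟩
end

section
/- Let p be a prime and let H_s = ⟨a, t₁,…,t_r | a^(p^s) = 1, tᵢ a^(nᵢ) tᵢ⁻¹ = a^(mᵢ)⟩ where nᵢ = p^(σᵢ) n̂ᵢ, mᵢ = p^(σᵢ) m̂ᵢ with p ∤ n̂ᵢ m̂ᵢ and p | (m̂ᵢ − n̂ᵢ) for all i. Then H_s is residually a finite p-group. -/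
/-!
Let `H` be the group, `a` its base generator and `f : H → Q` a homomorphism to a finite `p`-group
that is injective on `⟨a⟩`. Then `H` embeds in the wreath product of a free group by `Q`: the free
generators are the edges of the quotient of the Bass–Serre tree of `H` by `ker f`, the element `a`
goes to `f a` in the top group, and `tᵢ` goes to `f tᵢ` decorated with the edges of type `i`. To
see that nothing is lost, choose `σ : Q → H` equivariant under `⟨a⟩ ≃ f ⟨a⟩`; replacing the edge of
type `i` at `x` by `(σ x)⁻¹ tᵢ σ(f(tᵢ)⁻¹ x)` recovers the injective Kaloujnine–Krasner homomorphism
`H → H ≀ Q`. The wreath product of a residually finite-`p` group by a finite `p`-group is residually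
finite-`p`.

Free groups are residually finite-`p` by a finite form of the Magnus representation: if `N ^ 2 = 0`
then `(1 + N) ^ e = 1 + e N`, so a reduced word with exponents `e₁, …, eₖ` can be mapped to a matrix
over `ℤ/p^K`, unitriangular modulo `p`, whose corner entry is `e₁ ⋯ eₖ`.

The homomorphism `f` exists because `mᵢ = u nᵢ` in `ℤ/p^s` for some `u ≡ 1` modulo `p`: send `a` to
the elementary matrix `1 + E₀₁` and `tᵢ` to `diag(u, 1)`.
-/

/-- A group is residually a finite `p`-group if its nontrivial elements survive in finite
`p`-groups. The quotients are taken in `Type`, which loses nothing as they are finite. -/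
def IsResiduallyPGroup (p : ℕ) (G : Type*) [Group G] : Prop :=
  ∀ g : G, g ≠ 1 →
    ∃ (Q : Type) (_ : Group Q) (f : G →* Q), Finite Q ∧ IsPGroup p Q ∧ f g ≠ 1

theorem IsResiduallyPGroup.of_injective {p : ℕ} {G G' : Type*} [Group G] [Group G']
    (hG' : IsResiduallyPGroup p G') {φ : G →* G'} (hφ : Function.Injective φ) :
    IsResiduallyPGroup p G := fun g hg =>
  let ⟨Q, _, f, hfin, hQ, hfg⟩ := hG' (φ g) ((map_ne_one_iff φ hφ).mpr hg)
  ⟨Q, _, f.comp φ, hfin, hQ, hfg⟩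

section WreathProduct

variable {p : ℕ} {D E Q : Type*} [Group D] [Group E] [Group Q]

/-- Functoriality of the regular wreath product `D ≀ᵣ Q` in the base group `D`. -/
def wreathMap (φ : D →* E) : D ≀ᵣ Q →* E ≀ᵣ Q where
  toFun w := ⟨fun x => φ (w.left x), w.right⟩
  map_one' := by ext <;> simp
  map_mul' _ _ := by ext <;> simp

theorem isPGroup_wreathProduct [Fact p.Prime] [Finite D] [Finite Q] (hD : IsPGroup p D)
    (hQ : IsPGroup p Q) : IsPGroup p (D ≀ᵣ Q) := by
  obtain ⟨a, ha⟩ := IsPGroup.iff_card.mp hD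
  obtain ⟨b, hb⟩ := IsPGroup.iff_card.mp hQ
  refine IsPGroup.of_card (n := a * Nat.card Q + b) ?_
  rw [RegularWreathProduct.card, ha, pow_add, pow_mul, ← hb]

theorem IsResiduallyPGroup.wreathProduct [Fact p.Prime] (hD : IsResiduallyPGroup p D) {Q : Type}
    [Group Q] [Finite Q] (hQ : IsPGroup p Q) : IsResiduallyPGroup p (D ≀ᵣ Q) := by
  intro w hw
  by_cases hright : w.right = 1
  · obtain ⟨x, hx⟩ : ∃ x, w.left x ≠ 1 := by
      by_contra! hleft
      exact hw (RegularWreathProduct.ext (funext hleft) hright)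
    obtain ⟨P, _, f, _, hP, hfx⟩ := hD _ hx
    exact ⟨P ≀ᵣ Q, _, wreathMap f, inferInstance, isPGroup_wreathProduct hP hQ,
      fun h => hfx (congrFun (congrArg RegularWreathProduct.left h) x)⟩
  · exact ⟨Q, _, RegularWreathProduct.rightHom, inferInstance, hQ, hright⟩

end WreathProduct

section Embedding

variable {H Q : Type*} [Group H] [Group Q]

/-- The Kaloujnine–Krasner homomorphism of `f : H →* Q`, twisted by an arbitrary map
`σ : Q → H` (which is not required to be a section of `f`). -/
def kaloujnineKrasner (f : H →* Q) (σ : Q → H) : H →* H ≀ᵣ Q where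
  toFun g := ⟨fun x => (σ x)⁻¹ * g * σ ((f g)⁻¹ * x), f g⟩
  map_one' := by ext <;> simp
  map_mul' _ _ := by ext <;> simp [mul_assoc]

theorem kaloujnineKrasner_injective (f : H →* Q) (σ : Q → H) :
    Function.Injective (kaloujnineKrasner f σ) := by
  refine (injective_iff_map_eq_one _).mpr fun g hg => ?_
  have hright : f g = 1 := congrArg RegularWreathProduct.right hg
  have hleft : (σ 1)⁻¹ * g * σ ((f g)⁻¹ * 1) = 1 :=
    congrFun (congrArg RegularWreathProduct.left hg) 1
  rwa [hright, inv_one, one_mul, mul_assoc, inv_mul_eq_one, right_eq_mul] at hleft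

theorem exists_equivariant_of_injOn {f : H →* Q} {A : Subgroup H} (hf : Set.InjOn f A) :
    ∃ σ : Q → H, ∀ c ∈ A, ∀ x, σ (f c * x) = c * σ x := by
  let cosets := QuotientGroup.rightRel (A.map f)
  have hrep (x : Q) : ∃ c ∈ A, f c = x * (Quotient.mk cosets x).out⁻¹ :=
    QuotientGroup.rightRel_apply.mp (Quotient.mk_out (s := cosets) x)
  choose σ hσA hσ using hrep
  refine ⟨σ, fun c hc x => hf (hσA _) (A.mul_mem hc (hσA x)) ?_⟩
  have hcoset : Quotient.mk cosets (f c * x) = Quotient.mk cosets x :=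
    Quotient.sound <| QuotientGroup.rightRel_apply.mpr ⟨c⁻¹, A.inv_mem hc, by simp⟩
  rw [map_mul, hσ, hσ, hcoset, mul_assoc]

section EdgeLabel

variable {ι : Type*} (f : H →* Q) (C : ι → Subgroup H)

/-- The right cosets of the subgroups `f (C i)` of `Q`. If `H` is an HNN-extension with stable
letters `t i` and edge groups `C i`, and `f` is onto, these are the edges of the quotient of the
Bass–Serre tree of `H` by the kernel of `f`. -/
abbrev EdgeLabel : Type _ :=
  Σ i, Quotient (QuotientGroup.rightRel ((C i).map f))

/-- The coset of `x` under `f (C i)`, as an edge label. -/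
def EdgeLabel.mk (i : ι) (x : Q) : EdgeLabel f C := ⟨i, Quotient.mk _ x⟩

variable {f C}

theorem EdgeLabel.mk_mul {i : ι} {c : H} (hc : c ∈ C i) (x : Q) :
    EdgeLabel.mk f C i (f c * x) = EdgeLabel.mk f C i x :=
  congrArg (Sigma.mk i) <| Quotient.sound <| QuotientGroup.rightRel_apply.mpr
    ⟨c⁻¹, inv_mem hc, by simp⟩

theorem EdgeLabel.exists_map_mul_out_eq (i : ι) (x : Q) :
    ∃ c ∈ C i, f c * (EdgeLabel.mk f C i x).2.out = x := by
  obtain ⟨c, hc, hcx⟩ := QuotientGroup.rightRel_apply.mp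
    (Quotient.mk_out (s := QuotientGroup.rightRel ((C i).map f)) x)
  exact ⟨c, hc, by rw [hcx]; exact inv_mul_cancel_right _ _⟩

end EdgeLabel

variable {ι : Type*} {f : H →* Q} {A : Subgroup H} {C : ι → Subgroup H} {t : ι → H}

/-- An `A`-equivariant `σ : Q → H` turns the edge labelled by `i` and `x` into the element
`(σ x)⁻¹ * t i * σ ((f (t i))⁻¹ * x)` of `H`. Composing `F` with this substitution yields the
Kaloujnine–Krasner homomorphism, which is injective. -/
theorem injective_of_edgeLabel (hf : Set.InjOn f A) (hCA : ∀ i, C i ≤ A)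
    (hC : ∀ i, ∀ c ∈ C i, (t i)⁻¹ * c * t i ∈ A)
    (hgen : Subgroup.closure (A ∪ Set.range t) = ⊤) {F : H →* FreeGroup (EdgeLabel f C) ≀ᵣ Q}
    (hFA : ∀ c ∈ A, F c = RegularWreathProduct.inl (f c))
    (hFt : ∀ i, F (t i) = ⟨fun x => FreeGroup.of (EdgeLabel.mk f C i x), f (t i)⟩) :
    Function.Injective F := by
  obtain ⟨σ, hσ⟩ := exists_equivariant_of_injOn hf
  let edge (i : ι) (x : Q) : H := (σ x)⁻¹ * t i * σ ((f (t i))⁻¹ * x)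
  have edge_mul (i : ι) (c : H) (hc : c ∈ C i) (x : Q) : edge i (f c * x) = edge i x := by
    have hx : (f (t i))⁻¹ * (f c * x) = f ((t i)⁻¹ * c * t i) * ((f (t i))⁻¹ * x) := by
      simp [mul_assoc]
    simp only [edge, hx, hσ _ (hC i c hc), hσ c (hCA i hc)]
    group
  have edge_out (i : ι) (x : Q) : edge i (EdgeLabel.mk f C i x).2.out = edge i x := by
    obtain ⟨c, hc, hcx⟩ := EdgeLabel.exists_map_mul_out_eq (f := f) (C := C) i x
    rw [← edge_mul i c hc, hcx]
  let φ : FreeGroup (EdgeLabel f C) →* H := FreeGroup.lift fun l => edge l.1 l.2.out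
  have hφ (i : ι) (x : Q) : φ (FreeGroup.of (EdgeLabel.mk f C i x)) = edge i x := by
    rw [FreeGroup.lift_apply_of, ← edge_out i x]
    rfl
  have hφF : (wreathMap φ).comp F = kaloujnineKrasner f σ := by
    refine MonoidHom.eq_of_eqOn_dense hgen ?_
    rintro g (hg | ⟨i, rfl⟩)
    · ext x
      · simp [wreathMap, kaloujnineKrasner, hFA g hg, ← map_inv, hσ _ (A.inv_mem hg)]
      · simp [wreathMap, kaloujnineKrasner, hFA g hg]
    · ext x
      · simp [wreathMap, kaloujnineKrasner, hFt, hφ, edge]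
      · simp [wreathMap, kaloujnineKrasner, hFt]
  have hcomp : Function.Injective (wreathMap φ ∘ F) := by
    rw [← MonoidHom.coe_comp, hφF]
    exact kaloujnineKrasner_injective f σ
  exact hcomp.of_comp

end Embedding

section UnitriangularMod

/-- If `N = x - 1`, then `x ^ p ^ a ≡ 1 + N ^ p ^ a` modulo `p`, and raising a congruence modulo `p`
to the power `p ^ b` turns it into a congruence modulo `p ^ (b + 1)`. -/
theorem exists_pow_prime_pow_eq_one {R : Type*} [Ring R] {p : ℕ} (hp : p.Prime)
    (hpR : IsNilpotent (p : R)) {x : R} (hx : IsNilpotent (x - 1)) : ∃ k : ℕ, x ^ p ^ k = 1 := by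
  obtain ⟨a, ha⟩ := hx
  obtain ⟨b, hb⟩ := hpR
  open Polynomial in
  have hmod : (p : ℤ[X]) ∣ X ^ p ^ a - (1 + (X - 1) ^ p ^ a) := by
    obtain ⟨r, hr⟩ := exists_add_pow_prime_pow_eq hp (1 : ℤ[X]) (X - 1) a
    exact ⟨1 * (X - 1) * r, by rw [← add_sub_cancel 1 X, hr]; ring⟩
  obtain ⟨q, hq⟩ := dvd_sub_pow_of_dvd_sub hmod b
  have hpow_a : (x - 1) ^ p ^ a = 0 := pow_eq_zero_of_le (Nat.lt_pow_self hp.one_lt).le ha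
  refine ⟨a + b, sub_eq_zero.mp ?_⟩
  simpa [pow_succ, hb, hpow_a, ← pow_mul, ← pow_add] using congrArg (Polynomial.aeval x) hq

theorem isNilpotent_of_strictUpperTriangular {R : Type*} [CommRing R] {d : ℕ}
    {N : Matrix (Fin d) (Fin d) R} (hN : ∀ i j, j ≤ i → N i j = 0) : IsNilpotent N := by
  have hchar : N.charpoly = Polynomial.X ^ d := by
    rw [Matrix.charpoly_of_isUpperTriangular N fun i j hji => hN i j (le_of_lt hji)]
    simp [hN _ _ le_rfl]
  exact ⟨d, by simpa [hchar] using N.aeval_self_charpoly⟩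

variable (R : Type*) [CommRing R] (p d : ℕ)

/-- The square matrices that are upper unitriangular modulo `p`. Its group of units is, when `p` is
prime and nilpotent in a finite ring `R`, a finite `p`-group. -/
def unitriangularMod : Submonoid (Matrix (Fin d) (Fin d) R) where
  carrier := {M | ∀ i j, j ≤ i → (p : R) ∣ (M - 1) i j}
  one_mem' i j _ := by simp
  mul_mem' {M N} hM hN i j hji := by
    have hMN : M * N - 1 = (M - 1) * (N - 1) + ((M - 1) + (N - 1)) := by noncomm_ring
    rw [hMN, Matrix.add_apply, Matrix.mul_apply]
    refine dvd_add (Finset.dvd_sum fun k _ => ?_) (dvd_add (hM i j hji) (hN i j hji))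
    rcases le_total k i with hki | hik
    · exact (hM i k hki).mul_right _
    · exact (hN k j (hji.trans hik)).mul_left _

variable {R p d}

theorem isNilpotent_sub_one_of_mem_unitriangularMod (hpR : IsNilpotent (p : R))
    {M : Matrix (Fin d) (Fin d) R} (hM : M ∈ unitriangularMod R p d) : IsNilpotent (M - 1) := by
  let π := (Ideal.Quotient.mk (Ideal.span {(p : R)})).mapMatrix (m := Fin d)
  have hπ : IsNilpotent (π (M - 1)) := isNilpotent_of_strictUpperTriangular fun i j hji =>
    Ideal.Quotient.eq_zero_iff_dvd _ _ |>.mpr (hM i j hji)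
  obtain ⟨k, hk⟩ := hπ
  have hdvd (i j : Fin d) : (p : R) ∣ ((M - 1) ^ k) i j := by
    rw [← map_pow] at hk
    exact (Ideal.Quotient.eq_zero_iff_dvd _ _).mp (congrFun (congrFun hk i) j)
  choose N hN using hdvd
  have hpow : (M - 1) ^ k = (p : R) • Matrix.of N := Matrix.ext hN
  obtain ⟨m, hm⟩ := hpR
  exact ⟨k * m, by rw [pow_mul, hpow, smul_pow, hm, zero_smul]⟩

theorem exists_pow_prime_pow_eq_one_of_unitriangularMod (hp : p.Prime) (hpR : IsNilpotent (p : R))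
    (M : unitriangularMod R p d) : ∃ k : ℕ, M ^ p ^ k = 1 := by
  obtain ⟨k, hk⟩ := exists_pow_prime_pow_eq_one hp (x := (M : Matrix (Fin d) (Fin d) R))
    (by simpa using hpR.map (algebraMap R (Matrix (Fin d) (Fin d) R)))
    (isNilpotent_sub_one_of_mem_unitriangularMod hpR M.2)
  exact ⟨k, Subtype.ext hk⟩

theorem isUnit_unitriangularMod (hp : p.Prime) (hpR : IsNilpotent (p : R))
    (M : unitriangularMod R p d) : IsUnit M :=
  let ⟨_, hk⟩ := exists_pow_prime_pow_eq_one_of_unitriangularMod hp hpR M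
  .of_pow_eq_one hk (pow_ne_zero _ hp.ne_zero)

theorem isPGroup_units_unitriangularMod (hp : p.Prime) (hpR : IsNilpotent (p : R)) :
    IsPGroup p (unitriangularMod R p d)ˣ := isPGroup_iff_pow_pow_eq_one.mpr fun u =>
  let ⟨k, hk⟩ := exists_pow_prime_pow_eq_one_of_unitriangularMod hp hpR
    (u : unitriangularMod R p d)
  ⟨k, Units.ext (by simpa using hk)⟩

theorem isNilpotent_natCast_zmod_pow (p K : ℕ) : IsNilpotent (p : ZMod (p ^ K)) :=
  ⟨K, by rw [← Nat.cast_pow, ZMod.natCast_self]⟩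

end UnitriangularMod

theorem map_zpow_eq_one_add_zsmul {G R : Type*} [Group G] [Ring R] (φ : G →* R) {N : R}
    (hN : N * N = 0) {u : G} (hu : φ u = 1 + N) (e : ℤ) : φ (u ^ e) = 1 + e • N := by
  have hu_inv : φ u⁻¹ = 1 - N :=
    left_inv_eq_right_inv (a := φ u) (by rw [← map_mul, inv_mul_cancel, map_one])
      (by simp [hu, add_mul, mul_sub, hN])
  induction e with
  | zero => simp
  | succ e ih =>
    rw [zpow_add_one, map_mul, ih, hu]
    simp only [add_mul, mul_add, one_mul, mul_one, smul_mul_assoc, hN, smul_zero, add_smul,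
      one_smul]
    abel
  | pred e ih =>
    rw [zpow_sub_one, map_mul, ih, hu_inv]
    simp only [add_mul, mul_sub, one_mul, mul_one, smul_mul_assoc, hN, smul_zero, sub_smul,
      one_smul]
    abel

theorem exists_syllables_freeGroup {ι : Type*} (g : FreeGroup ι) :
    ∃ (n : ℕ) (x : Fin n → ι) (e : Fin n → ℤ), (∀ j k : Fin n, (k : ℕ) = j + 1 → x j ≠ x k) ∧
      (∀ j, e j ≠ 0) ∧ g = (List.ofFn fun j => FreeGroup.of (x j) ^ e j).prod := by
  classical
  let toCoprod : FreeGroup ι →* Monoid.CoprodI fun _ : ι => Multiplicative ℤ :=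
    FreeGroup.lift fun x => Monoid.CoprodI.of (i := x) (Multiplicative.ofAdd 1)
  let ofCoprod : (Monoid.CoprodI fun _ : ι => Multiplicative ℤ) →* FreeGroup ι :=
    Monoid.CoprodI.lift fun x => zpowersHom _ (FreeGroup.of x)
  have hcomp : ofCoprod.comp toCoprod = .id _ := by ext x; simp [toCoprod, ofCoprod]
  let w := Monoid.CoprodI.Word.equiv (toCoprod g)
  have hw : g = ofCoprod w.prod := by
    rw [show w.prod = toCoprod g from Monoid.CoprodI.Word.equiv.symm_apply_apply _]
    exact (DFunLike.congr_fun hcomp g).symm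
  refine ⟨w.toList.length, fun j => (w.toList.get j).1, fun j => (w.toList.get j).2.toAdd,
    ?_, ?_, ?_⟩
  · rintro j ⟨_, hk⟩ rfl
    exact List.isChain_iff_getElem.mp w.chain_ne j hk
  · exact fun j => w.ne_one _ (List.get_mem _ j)
  · rw [hw, Monoid.CoprodI.Word.prod, map_list_prod, List.map_map, ← List.ofFn_getElem_eq_map]
    simp [ofCoprod]

section Hessenberg

variable {R : Type*} [CommRing R] {n : ℕ}

/-- Each factor moves the index up by at most one, so the entry `(0, j)` of a product of `j` factors
comes from the single path `0 → 1 → ⋯ → j`. -/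
theorem partialProd_hessenberg_apply_zero {M : Fin n → Matrix (Fin (n + 1)) (Fin (n + 1)) R}
    (hM : ∀ i (a b : Fin (n + 1)), (a : ℕ) + 1 < b → M i a b = 0) (j l : Fin (n + 1))
    (hjl : j ≤ l) :
    Fin.partialProd M j 0 l =
      if j = l then Fin.partialProd (fun i => M i i.castSucc i.succ) j else 0 := by
  induction j using Fin.induction generalizing l with
  | zero => simp [Matrix.one_apply]
  | succ j ih =>
    rw [Fin.partialProd_succ, Fin.partialProd_succ, Matrix.mul_apply,
      Finset.sum_eq_single j.castSucc, ih _ le_rfl, if_pos rfl]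
    · split_ifs with h
      · rw [h]
      · rw [hM _ _ _ (by grind), mul_zero]
    · intro k _ hk
      rcases lt_or_gt_of_ne hk with hkj | hjk
      · rw [hM _ _ _ (by grind), mul_zero]
      · rw [ih k hjk.le, if_neg hjk.ne, zero_mul]
    · simp

theorem prod_hessenberg_apply_zero_last {M : Fin n → Matrix (Fin (n + 1)) (Fin (n + 1)) R}
    (hM : ∀ i (a b : Fin (n + 1)), (a : ℕ) + 1 < b → M i a b = 0) :
    (List.ofFn M).prod 0 (Fin.last n) = ∏ i, M i i.castSucc i.succ := by
  have h := partialProd_hessenberg_apply_zero hM (Fin.last n) (Fin.last n) le_rfl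
  simpa [Fin.partialProd, List.take_of_length_le, List.prod_ofFn] using h

end Hessenberg

section FreeGroup

variable {ι : Type*} {n : ℕ}

open Classical in
/-- The sum of the elementary matrices `E_{j,j+1}` over the positions `j` with `x j = y`. -/
noncomputable def syllableMatrix (R : Type*) [CommRing R] (x : Fin n → ι) (y : ι) :
    Matrix (Fin (n + 1)) (Fin (n + 1)) R :=
  .of fun a b => if ∃ j, x j = y ∧ j.castSucc = a ∧ j.succ = b then 1 else 0

variable {R : Type*} [CommRing R]

theorem syllableMatrix_castSucc_succ (x : Fin n → ι) (j : Fin n) :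
    syllableMatrix R x (x j) j.castSucc j.succ = 1 :=
  if_pos ⟨j, rfl, rfl, rfl⟩

theorem syllableMatrix_of_ne (x : Fin n → ι) (y : ι) {a b : Fin (n + 1)} (hab : (b : ℕ) ≠ a + 1) :
    syllableMatrix R x y a b = 0 :=
  if_neg fun ⟨_, _, ha, hb⟩ => hab (by simp [← ha, ← hb])

theorem syllableMatrix_mul_self {x : Fin n → ι} (hx : ∀ j k : Fin n, (k : ℕ) = j + 1 → x j ≠ x k)
    (y : ι) : syllableMatrix R x y * syllableMatrix R x y = 0 := by
  ext a c
  rw [Matrix.mul_apply]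
  refine Finset.sum_eq_zero fun b _ => ?_
  by_cases hab : ∃ j, x j = y ∧ j.castSucc = a ∧ j.succ = b
  · obtain ⟨j, hj, rfl, rfl⟩ := hab
    refine mul_eq_zero_of_right _ (if_neg ?_)
    rintro ⟨k, hk, hkj, _⟩
    exact hx j k (congrArg Fin.val hkj) (hj.trans hk.symm)
  · exact mul_eq_zero_of_left (if_neg hab) _

theorem one_add_syllableMatrix_mem (p : ℕ) (x : Fin n → ι) (y : ι) :
    1 + syllableMatrix R x y ∈ unitriangularMod R p (n + 1) := fun i j hji => by
  rw [add_sub_cancel_left, syllableMatrix_of_ne x y (by grind)]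
  exact dvd_zero _

theorem prod_syllables_apply_zero_last (x : Fin n → ι) (e : Fin n → ℤ) :
    (List.ofFn fun j => 1 + e j • syllableMatrix R x (x j)).prod 0 (Fin.last n) =
      (∏ j, e j : ℤ) := by
  rw [prod_hessenberg_apply_zero_last fun j a b hab => ?_]
  · simp only [Matrix.add_apply, Matrix.one_apply_ne Fin.castSucc_lt_succ.ne, Matrix.smul_apply,
      syllableMatrix_castSucc_succ, zero_add, zsmul_one, Int.cast_prod]
  · rw [Matrix.add_apply, Matrix.smul_apply, syllableMatrix_of_ne x _ hab.ne', smul_zero, add_zero,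
      Matrix.one_apply_ne (by grind)]

theorem exists_not_natCast_pow_dvd {p : ℕ} (hp : 1 < p) {e : ℤ} (he : e ≠ 0) :
    ∃ K : ℕ, ¬ ((p ^ K : ℕ) : ℤ) ∣ e := by
  refine ⟨e.natAbs, fun h => he (Int.eq_zero_of_dvd_of_natAbs_lt_natAbs h ?_)⟩
  simpa using Nat.lt_pow_self hp

theorem isResiduallyPGroup_freeGroup (p : ℕ) [hp : Fact p.Prime] (ι : Type*) :
    IsResiduallyPGroup p (FreeGroup ι) := by
  intro g hg
  obtain ⟨n, x, e, hx, he, rfl⟩ := exists_syllables_freeGroup g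
  have hn : n ≠ 0 := by rintro rfl; exact hg rfl
  obtain ⟨K, hK⟩ := exists_not_natCast_pow_dvd hp.out.one_lt
    (Finset.prod_ne_zero_iff.mpr fun j _ => he j)
  have hpK := isNilpotent_natCast_zmod_pow p K
  let T := unitriangularMod (ZMod (p ^ K)) p (n + 1)
  let θ : FreeGroup ι →* Tˣ := FreeGroup.lift fun y =>
    (isUnit_unitriangularMod hp.out hpK ⟨_, one_add_syllableMatrix_mem p x y⟩).unit
  let θM := (T.subtype.comp (Units.coeHom T)).comp θ
  have hθM (j : Fin n) :
      θM (FreeGroup.of (x j) ^ e j) = 1 + e j • syllableMatrix (ZMod (p ^ K)) x (x j) :=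
    map_zpow_eq_one_add_zsmul θM (syllableMatrix_mul_self hx (x j)) (by simp [θM, θ]) (e j)
  have hcorner : θM (List.ofFn fun j => FreeGroup.of (x j) ^ e j).prod 0 (Fin.last n) =
      (∏ j, e j : ℤ) := by
    rw [map_list_prod, List.map_ofFn, ← prod_syllables_apply_zero_last x e]
    simp only [Function.comp_def, hθM]
  refine ⟨Tˣ, _, θ, inferInstance, isPGroup_units_unitriangularMod hp.out hpK, fun hθ => hK ?_⟩
  rw [← ZMod.intCast_zmod_eq_zero_iff_dvd, ← hcorner, MonoidHom.comp_apply, hθ, map_one]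
  exact Matrix.one_apply_ne (by simpa [Fin.ext_iff] using hn.symm)

end FreeGroup

section CyclicHNN

variable {ι : Type*} (N : ℕ) (n m : ι → ℤ)

/-- The relators `a ^ N` and `tᵢ * a ^ n i * tᵢ⁻¹ * (a ^ m i)⁻¹`, where `a` is the generator
`Sum.inl ()` and `tᵢ` is the generator `Sum.inr i`. -/
def cyclicHNNRelators : Set (FreeGroup (Unit ⊕ ι)) :=
  {w | w = FreeGroup.of (Sum.inl ()) ^ N ∨
    ∃ i, w = FreeGroup.of (Sum.inr i) * FreeGroup.of (Sum.inl ()) ^ n i *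
      (FreeGroup.of (Sum.inr i))⁻¹ * (FreeGroup.of (Sum.inl ()) ^ m i)⁻¹}

/-- The group generated by `a` and `tᵢ` with the relations `a ^ N = 1` and
`tᵢ * a ^ n i * tᵢ⁻¹ = a ^ m i`. It is an HNN-extension of the cyclic group of order `N` only
if `n i` and `m i` have the same additive order in `ZMod N`. -/
abbrev CyclicHNN : Type _ := PresentedGroup (cyclicHNNRelators N n m)

namespace CyclicHNN

/-- The generator of the base group. -/
def base : CyclicHNN N n m := PresentedGroup.of (Sum.inl ())

/-- The stable letters. -/
def stable (i : ι) : CyclicHNN N n m := PresentedGroup.of (Sum.inr i)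

/-- The edge group `⟨a ^ m i⟩ = tᵢ ⟨a ^ n i⟩ tᵢ⁻¹` of the stable letter `i`. -/
def edgeGroup (i : ι) : Subgroup (CyclicHNN N n m) := Subgroup.zpowers (base N n m ^ m i)

theorem base_pow : base N n m ^ N = 1 := by
  rw [base, PresentedGroup.of, ← map_pow]
  exact PresentedGroup.one_of_mem (.inl rfl)

theorem semiconjBy_stable (i : ι) :
    SemiconjBy (stable N n m i) (base N n m ^ n i) (base N n m ^ m i) := by
  rw [SemiconjBy, ← mul_inv_eq_iff_eq_mul, ← mul_inv_eq_one]
  simp only [base, stable, PresentedGroup.of, ← map_zpow, ← map_mul, ← map_inv]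
  exact PresentedGroup.one_of_mem (.inr ⟨i, rfl⟩)

theorem closure_zpowers_base_union_range_stable :
    Subgroup.closure (Subgroup.zpowers (base N n m) ∪ Set.range (stable N n m)) = ⊤ := by
  rw [← top_le_iff, ← PresentedGroup.closure_range_of, Subgroup.closure_le]
  rintro _ ⟨⟨⟩ | i, rfl⟩
  · exact Subgroup.subset_closure (.inl (Subgroup.mem_zpowers _))
  · exact Subgroup.subset_closure (.inr ⟨i, rfl⟩)

variable {N n m}

section Lift

variable {G : Type*} [Group G] {α : G} {τ : ι → G} (hα : α ^ N = 1)
  (hτ : ∀ i, SemiconjBy (τ i) (α ^ n i) (α ^ m i))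

/-- The homomorphism out of `CyclicHNN N n m` with prescribed values on the generators. -/
def lift : CyclicHNN N n m →* G :=
  PresentedGroup.toGroup (f := Sum.elim (fun _ => α) τ) <| by
    rintro _ (rfl | ⟨i, rfl⟩)
    · simpa using hα
    · simpa [mul_inv_eq_one, mul_inv_eq_iff_eq_mul] using (hτ i).eq

@[simp]
theorem lift_base : lift hα hτ (base N n m) = α :=
  PresentedGroup.toGroup.of _

@[simp]
theorem lift_stable (i : ι) : lift hα hτ (stable N n m i) = τ i :=
  PresentedGroup.toGroup.of _

end Lift

variable {Q : Type*} [Group Q] (f : CyclicHNN N n m →* Q)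

/-- The image under `edgeHom f` of the stable letter `i`: its image in `Q`, decorated with the free
generators given by the edges of type `i`. -/
def edgeStable (i : ι) : FreeGroup (EdgeLabel f (edgeGroup N n m)) ≀ᵣ Q :=
  ⟨fun x => FreeGroup.of (EdgeLabel.mk f _ i x), f (stable N n m i)⟩

theorem semiconjBy_edgeStable (i : ι) :
    SemiconjBy (edgeStable f i) (RegularWreathProduct.inl (f (base N n m)) ^ n i)
      (RegularWreathProduct.inl (f (base N n m)) ^ m i) := by
  have label_inv_mul (x : Q) :
      EdgeLabel.mk f (edgeGroup N n m) i ((f (base N n m ^ m i))⁻¹ * x) =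
        EdgeLabel.mk f (edgeGroup N n m) i x := by
    have hmem : (base N n m ^ m i)⁻¹ ∈ edgeGroup N n m i :=
      Subgroup.inv_mem _ (Subgroup.mem_zpowers _)
    rw [← map_inv, EdgeLabel.mk_mul hmem]
  simp only [← map_zpow]
  ext x
  · simp only [edgeStable, RegularWreathProduct.mul_left, RegularWreathProduct.left_inl,
      RegularWreathProduct.right_inl, Pi.mul_apply, Pi.one_apply, mul_one, one_mul, label_inv_mul]
  · simpa only [edgeStable, RegularWreathProduct.mul_right, RegularWreathProduct.right_inl,
      map_mul] using congrArg f (semiconjBy_stable N n m i).eq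

/-- The homomorphism sending `base` to its image in the top group `Q` and the stable letters to
`edgeStable f`. -/
def edgeHom : CyclicHNN N n m →* FreeGroup (EdgeLabel f (edgeGroup N n m)) ≀ᵣ Q :=
  lift (by rw [← map_pow, ← map_pow, base_pow, map_one, map_one]) (semiconjBy_edgeStable f)

variable {f}

theorem injOn_zpowers_base (hf : orderOf (f (base N n m)) = N) :
    Set.InjOn f (Subgroup.zpowers (base N n m)) := by
  rintro _ ⟨k, rfl⟩ _ ⟨l, rfl⟩ hkl
  have hmod : k ≡ l [ZMOD N] := by
    simpa only [map_zpow, zpow_eq_zpow_iff_modEq, hf] using hkl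
  exact zpow_eq_zpow_iff_modEq.mpr <|
    hmod.of_dvd (Int.natCast_dvd_natCast.mpr (orderOf_dvd_of_pow_eq_one (base_pow N n m)))

theorem edgeHom_injective (hf : Set.InjOn f (Subgroup.zpowers (base N n m))) :
    Function.Injective (edgeHom f) := by
  refine injective_of_edgeLabel hf (t := stable N n m) (fun i => ?_) ?_
    (closure_zpowers_base_union_range_stable N n m) ?_ (lift_stable _ _)
  · exact Subgroup.zpowers_le.mpr (Subgroup.zpow_mem_zpowers _ _)
  · rintro i _ ⟨k, rfl⟩
    have hconj : (stable N n m i)⁻¹ * (base N n m ^ m i) ^ k * stable N n m i =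
        (base N n m ^ n i) ^ k := by
      rw [mul_assoc, inv_mul_eq_iff_eq_mul]
      exact ((semiconjBy_stable N n m i).zpow_right k).eq.symm
    exact hconj ▸ Subgroup.zpow_mem _ (Subgroup.zpow_mem_zpowers _ _) _
  · rintro _ ⟨k, rfl⟩
    simp only [map_zpow, edgeHom, lift_base]

end CyclicHNN

variable {N n m}

theorem isResiduallyPGroup_cyclicHNN_of_orderOf {p : ℕ} [Fact p.Prime] {Q : Type} [Group Q]
    [Finite Q] (hQ : IsPGroup p Q) {f : CyclicHNN N n m →* Q}
    (hf : orderOf (f (CyclicHNN.base N n m)) = N) : IsResiduallyPGroup p (CyclicHNN N n m) :=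
  ((isResiduallyPGroup_freeGroup p _).wreathProduct hQ).of_injective
    (CyclicHNN.edgeHom_injective (CyclicHNN.injOn_zpowers_base hf))

end CyclicHNN

section FiniteQuotient

theorem one_add_single_mem_unitriangularMod (R : Type*) [CommRing R] (p : ℕ) :
    1 + Matrix.single 0 1 1 ∈ unitriangularMod R p 2 := fun i j hji => by
  rw [add_sub_cancel_left, Matrix.single_apply_of_ne _ _ _ _ _ (by grind)]
  exact dvd_zero _

theorem diagonal_mem_unitriangularMod {R : Type*} [CommRing R] {p : ℕ} {u : R}
    (hu : (p : R) ∣ u - 1) : Matrix.diagonal ![u, 1] ∈ unitriangularMod R p 2 := by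
  intro i j hji
  fin_cases i <;> fin_cases j <;> simp_all [Matrix.diagonal]

theorem diagonal_mul_one_add_zsmul_single {R : Type*} [CommRing R] {u : R} {n m : ℤ}
    (h : u * n = m) : Matrix.diagonal ![u, 1] * (1 + n • Matrix.single 0 1 1) =
      (1 + m • Matrix.single 0 1 1) * Matrix.diagonal ![u, 1] := by
  ext i j
  fin_cases i <;> fin_cases j <;> simp [h]

variable {ι : Type*} {p s : ℕ} {n m : ι → ℤ}

theorem exists_orderOf_base_eq (hp : p.Prime)
    (h : ∀ i, ∃ u : ZMod (p ^ s), (p : ZMod (p ^ s)) ∣ u - 1 ∧ u * n i = m i) :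
    ∃ f : CyclicHNN (p ^ s) n m →* (unitriangularMod (ZMod (p ^ s)) p 2)ˣ,
      orderOf (f (CyclicHNN.base (p ^ s) n m)) = p ^ s := by
  choose u hu hnm using h
  have hps := isNilpotent_natCast_zmod_pow p s
  let T := unitriangularMod (ZMod (p ^ s)) p 2
  let α : Tˣ := (isUnit_unitriangularMod hp hps ⟨_, one_add_single_mem_unitriangularMod _ p⟩).unit
  let τ (i : ι) : Tˣ :=
    (isUnit_unitriangularMod hp hps ⟨_, diagonal_mem_unitriangularMod (hu i)⟩).unit
  let toMatrix := T.subtype.comp (Units.coeHom T)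
  have toMatrix_inj : Function.Injective toMatrix :=
    Subtype.val_injective.comp Units.val_injective
  have hα (k : ℤ) : toMatrix (α ^ k) = 1 + k • Matrix.single 0 1 1 :=
    map_zpow_eq_one_add_zsmul toMatrix (by simp) rfl k
  have hα_pow (k : ℕ) : α ^ k = 1 ↔ p ^ s ∣ k := by
    rw [← zpow_natCast, ← toMatrix_inj.eq_iff, hα, map_one, add_eq_left, ← ZMod.natCast_eq_zero_iff]
    exact ⟨fun h => by simpa using congrFun₂ h 0 1, fun h => by simp [h]⟩
  have hα_order : orderOf α = p ^ s :=
    Nat.dvd_antisymm (orderOf_dvd_iff_pow_eq_one.mpr ((hα_pow _).mpr dvd_rfl))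
      ((hα_pow _).mp (pow_orderOf_eq_one α))
  have hτ (i : ι) : SemiconjBy (τ i) (α ^ n i) (α ^ m i) := toMatrix_inj <| by
    rw [map_mul, map_mul, hα, hα]
    exact diagonal_mul_one_add_zsmul_single (hnm i)
  exact ⟨CyclicHNN.lift ((hα_pow _).mpr dvd_rfl) hτ, by rw [CyclicHNN.lift_base, hα_order]⟩

theorem exists_mul_intCast_eq (hp : p.Prime) (s σ : ℕ) {a b : ℤ} (ha : ¬ (p : ℤ) ∣ a)
    (h : (p : ℤ) ∣ b - a) :
    ∃ u : ZMod (p ^ s), (p : ZMod (p ^ s)) ∣ u - 1 ∧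
      u * ((p ^ σ * a : ℤ) : ZMod (p ^ s)) = ((p ^ σ * b : ℤ) : ZMod (p ^ s)) := by
  have ha_unit : IsUnit (a : ZMod (p ^ s)) := by
    rw [ZMod.coe_int_isUnit_iff_isCoprime, Nat.cast_pow]
    exact ((Nat.prime_iff_prime_int.mp hp).coprime_iff_not_dvd.mpr ha).pow_left
  obtain ⟨v, hv⟩ := ha_unit.exists_left_inv
  have hdvd : (p : ZMod (p ^ s)) ∣ b - a := by
    simpa using map_dvd (Int.castRingHom (ZMod (p ^ s))) h
  refine ⟨v * b, ?_, ?_⟩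
  · rw [← hv, ← mul_sub]
    exact hdvd.mul_left v
  · push_cast
    linear_combination (p : ZMod (p ^ s)) ^ σ * b * hv

end FiniteQuotient

theorem isResiduallyPGroup_cyclicHNN {ι : Type*} {p : ℕ} (hp : p.Prime) {s : ℕ} {n m : ι → ℤ}
    (h : ∀ i, ∃ u : ZMod (p ^ s), (p : ZMod (p ^ s)) ∣ u - 1 ∧ u * n i = m i) :
    IsResiduallyPGroup p (CyclicHNN (p ^ s) n m) := by
  have : Fact p.Prime := ⟨hp⟩
  obtain ⟨f, hf⟩ := exists_orderOf_base_eq hp h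
  exact isResiduallyPGroup_cyclicHNN_of_orderOf
    (isPGroup_units_unitriangularMod hp (isNilpotent_natCast_zmod_pow p s)) hf

theorem stmt_10_general {ι : Type*} (p : ℕ) (hp : p.Prime) (s : ℕ) (n m : ι → ℤ) (σ : ι → ℕ)
    (nh mh : ι → ℤ) (hn : ∀ i, n i = (p : ℤ) ^ (σ i) * nh i)
    (hm : ∀ i, m i = (p : ℤ) ^ (σ i) * mh i) (hcop : ∀ i, ¬ (p : ℤ) ∣ (nh i * mh i))
    (hdvd : ∀ i, (p : ℤ) ∣ (mh i - nh i)) : IsResiduallyPGroup p (CyclicHNN (p ^ s) n m) :=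
  isResiduallyPGroup_cyclicHNN hp fun i => by
    have hnh : ¬ (p : ℤ) ∣ nh i := mt (·.mul_right _) (hcop i)
    simpa only [hn, hm] using exists_mul_intCast_eq hp s (σ i) hnh (hdvd i)

theorem stmt_10 (p : ℕ) (hp : p.Prime) (s : ℕ) (r : ℕ)
    (n m : Fin r → ℤ) (σ : Fin r → ℕ) (nh mh : Fin r → ℤ)
    (hn : ∀ i, n i = (p : ℤ) ^ (σ i) * nh i)
    (hm : ∀ i, m i = (p : ℤ) ^ (σ i) * mh i)
    (hcop : ∀ i, ¬ (p : ℤ) ∣ (nh i * mh i))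
    (hdvd : ∀ i, (p : ℤ) ∣ (mh i - nh i))
    (g : PresentedGroup
      ({w : FreeGroup (Unit ⊕ Fin r) |
          w = FreeGroup.of (Sum.inl ()) ^ (p ^ s) ∨
          ∃ i : Fin r,
            w = FreeGroup.of (Sum.inr i) * FreeGroup.of (Sum.inl ()) ^ (n i) *
              (FreeGroup.of (Sum.inr i))⁻¹ *
              (FreeGroup.of (Sum.inl ()) ^ (m i))⁻¹}))
    (hg : g ≠ 1) :
    ∃ (Q : Type) (_ : Group Q) (f : _ →* Q), Finite Q ∧ IsPGroup p Q ∧ f g ≠ 1 :=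
  stmt_10_general p hp s n m σ nh mh hn hm hcop hdvd g hg
end
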